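/- arXiv:1912.04177 — 8 statements merged into one kernel-verified Lean document; each statement's English description precedes it below -/
import Mathlib

section
/- Let A be a real symmetric n×n matrix with spectral decomposition A = Σᵢ λᵢ uᵢuᵢᵀ, where the eigenvalues are ordered by decreasing absolute value |λ₁| ≥ |λ₂| ≥ … ≥ |λₙ| and u₁,…,uₙ are orthonormal eigenvectors, and let A_k = Σ_{i=1}^k λᵢ uᵢuᵢᵀ be the rank-k spectral truncation. Let k ≥ 1 be an integer, ε > 0, and let P ∈ ℝ^{n×n} be an orthogonal projection (P = Pᵀ = P²) satisfying ‖A (I − P)‖₂² ≤ (ε/k) · ‖A − A_k‖_F². Then ‖A − P A_k P‖_F² ≤ (1 + 6ε) · ‖A − A_k‖_F². -/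
open Matrix

noncomputable def frobeniusSq {m n : ℕ} (M : Matrix (Fin m) (Fin n) ℝ) : ℝ :=
  ∑ i, ∑ j, (M i j)^2

noncomputable def opNorm2 {m n : ℕ} (M : Matrix (Fin m) (Fin n) ℝ) : ℝ :=
  ‖LinearMap.toContinuousLinearMap (Matrix.toEuclideanLin M)‖

open scoped Matrix.Norms.L2Operator in
lemma aux_opNorm2_eq {m n : ℕ} (M : Matrix (Fin m) (Fin n) ℝ) : opNorm2 M = ‖M‖ := rfl

open scoped Matrix.Norms.L2Operator in
lemma aux_col {n : ℕ} (N : Matrix (Fin n) (Fin n) ℝ) (j : Fin n) :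
    ∑ i, (N i j)^2 ≤ ‖N‖^2 := by
  have h := Matrix.l2_opNorm_mulVec N (EuclideanSpace.single j (1:ℝ))
  have h2 : ‖EuclideanSpace.single j (1:ℝ)‖ = 1 := by simp
  rw [h2, mul_one] at h
  have h3 := pow_le_pow_left₀ (norm_nonneg _) h 2
  rw [EuclideanSpace.norm_sq_eq] at h3
  simpa using h3

open scoped Matrix.Norms.L2Operator in
lemma aux_row {n : ℕ} (N : Matrix (Fin n) (Fin n) ℝ) (j : Fin n) :
    ∑ i, (N j i)^2 ≤ ‖N‖^2 := by
  have h := aux_col Nᴴ j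
  rw [Matrix.l2_opNorm_conjTranspose] at h
  simpa using h

lemma aux_frob {n : ℕ} (M : Matrix (Fin n) (Fin n) ℝ) : frobeniusSq M = (M * Mᵀ).trace := by
  simp [frobeniusSq, Matrix.trace, Matrix.mul_apply, sq]

lemma aux_frob_conj {n : ℕ} (W M : Matrix (Fin n) (Fin n) ℝ) (hW : W * Wᵀ = 1) :
    frobeniusSq (Wᵀ * M * W) = frobeniusSq M := by
  rw [aux_frob, aux_frob]
  have : Wᵀ * M * W * (Wᵀ * M * W)ᵀ = Wᵀ * (M * Mᵀ * W) := by
    simp only [Matrix.transpose_mul, Matrix.transpose_transpose]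
    calc _ = Wᵀ * M * (W * Wᵀ) * (Mᵀ * W) := by simp only [Matrix.mul_assoc]
      _ = _ := by rw [hW]; simp only [Matrix.mul_assoc, Matrix.mul_one]
  rw [this, Matrix.trace_mul_comm, Matrix.mul_assoc, hW, Matrix.mul_one]

lemma aux_F {n : ℕ} (a b : Fin n → ℝ) (Q : Matrix (Fin n) (Fin n) ℝ) (hQ : Qᵀ = Q) :
    (diagonal a * (1 - Q) * (diagonal b * (1 - Q))).trace =
      ∑ i, a i * b i - 2 * ∑ i, a i * b i * Q i i + ∑ i, ∑ j, a i * b j * (Q i j)^2 := by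
  have hs : ∀ i j, Q j i = Q i j := fun i j => congrFun (congrFun hQ i) j
  simp only [Matrix.trace, Matrix.diag, Matrix.mul_apply (M := diagonal a * (1 - Q)),
    Matrix.diagonal_mul, Matrix.sub_apply]
  rw [Finset.mul_sum, ← Finset.sum_sub_distrib, ← Finset.sum_add_distrib]
  refine Finset.sum_congr rfl fun i _ => ?_
  have : ∀ j, a i * ((1 : Matrix (Fin n) (Fin n) ℝ) i j - Q i j) *
      (b j * ((1 : Matrix (Fin n) (Fin n) ℝ) j i - Q j i)) =
      (if i = j then a i * b j * (1 - 2 * Q i j) else 0) + a i * b j * (Q i j)^2 := by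
    intro j
    rw [hs i j]
    by_cases h : i = j
    · subst h; simp; ring
    · simp [h, Ne.symm h]; ring
  simp only [this, Finset.sum_add_distrib, Finset.sum_ite_eq, Finset.mem_univ, if_true]
  ring

lemma aux_diag {n : ℕ} (lam : Fin n → ℝ) (k : ℕ) (s : ℝ)
    (Q : Matrix (Fin n) (Fin n) ℝ) (hQ : Qᵀ = Q) (hQQ : Q * Q = Q)
    (hcol : ∀ j, ∑ i, (lam i * Q i j)^2 ≤ s) (hrow : ∀ j, ∑ i, (lam j * Q j i)^2 ≤ s)
    (mu : Fin n → ℝ) (hmu : mu = fun i : Fin n => if (i : ℕ) < k then lam i else 0) (hs : 0 ≤ s) :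
    frobeniusSq (diagonal lam - (1 - Q) * diagonal mu * (1 - Q)) ≤
      frobeniusSq (diagonal lam - diagonal mu) + 4 * (k * s) := by
  have hsy : ∀ i j, Q j i = Q i j := fun i j => congrFun (congrFun hQ i) j
  have hPP : (1 - Q) * (1 - Q) = 1 - Q := by
    simp [Matrix.mul_sub, Matrix.sub_mul, hQQ]
  have e1 : frobeniusSq (diagonal lam - (1 - Q) * diagonal mu * (1 - Q)) =
      (diagonal lam * diagonal lam).trace
      - 2 * (diagonal lam * (1 - Q) * (diagonal mu * (1 - Q))).trace
      + (diagonal mu * (1 - Q) * (diagonal mu * (1 - Q))).trace := by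
    rw [aux_frob]
    have ht : (diagonal lam - (1 - Q) * diagonal mu * (1 - Q))ᵀ
        = diagonal lam - (1 - Q) * diagonal mu * (1 - Q) := by
      simp [Matrix.transpose_mul, hQ, Matrix.mul_assoc]
    rw [ht]
    generalize 1 - Q = P at *
    rw [Matrix.sub_mul, Matrix.mul_sub, Matrix.mul_sub, Matrix.trace_sub, Matrix.trace_sub,
      Matrix.trace_sub, Matrix.trace_mul_comm (P * diagonal mu * P) (diagonal lam)]
    have : (P * diagonal mu * P * (P * diagonal mu * P)).trace
        = (diagonal mu * P * (diagonal mu * P)).trace := by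
      calc _ = (P * (diagonal mu * (P * P) * (diagonal mu * P))).trace := by
            simp only [Matrix.mul_assoc]
        _ = (diagonal mu * P * (diagonal mu * (P * P))).trace := by
            rw [hPP, Matrix.trace_mul_comm]; simp only [Matrix.mul_assoc, hPP]
        _ = _ := by rw [hPP]
    rw [this]
    simp only [Matrix.mul_assoc]
    ring
  have e2 : frobeniusSq (diagonal lam - diagonal mu) = ∑ i, (lam i ^2 - mu i ^2) := by
    rw [Matrix.diagonal_sub, aux_frob, Matrix.diagonal_transpose, Matrix.diagonal_mul_diagonal,
      Matrix.trace_diagonal]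
    refine Finset.sum_congr rfl fun i _ => ?_
    rw [hmu]; dsimp only; split_ifs <;> ring
  have hlm : ∀ i, lam i * mu i = mu i * mu i := by
    intro i; rw [hmu]; dsimp only; split_ifs <;> ring
  have hqd : ∀ i, Q i i = ∑ j, Q j i ^2 := by
    intro i
    conv_lhs => rw [← hQQ, Matrix.mul_apply]
    exact Finset.sum_congr rfl fun j _ => by rw [hsy j i]; ring
  rw [e1, e2, aux_F _ _ _ hQ, aux_F _ _ _ hQ, Matrix.diagonal_mul_diagonal, Matrix.trace_diagonal]
  simp only [hlm]
  have e3 : ∑ i, mu i * mu i * Q i i = ∑ i, ∑ j, mu j * mu j * Q i j ^2 := by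
    rw [Finset.sum_comm]
    exact Finset.sum_congr rfl fun i _ => by rw [hqd i, Finset.mul_sum]
  have key : 2 * ∑ i, ∑ j, mu j * mu j * Q i j ^2 - 2 * ∑ i, ∑ j, lam i * mu j * Q i j ^2
      + ∑ i, ∑ j, mu i * mu j * Q i j ^2 ≤ 4 * (k * s) := by
    have : ∀ j, ∑ i, (2 * (mu j * mu j * Q i j ^2) - 2 * (lam i * mu j * Q i j ^2)
        + mu i * mu j * Q i j ^2) ≤ if (j : ℕ) < k then 4 * s else 0 := by
      intro j
      by_cases hj : (j : ℕ) < k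
      · have hmj : mu j = lam j := by simp [hmu, hj]
        rw [if_pos hj, hmj]
        have h1 := hcol j
        have h2 := hrow j
        calc _ ≤ ∑ i, (3 * (lam j * Q j i)^2 + (lam i * Q i j)^2) := by
              refine Finset.sum_le_sum fun i _ => ?_
              rw [hsy i j]
              have hq := sq_nonneg (Q i j)
              have : 2 * (lam j * lam j) - 2 * (lam i * lam j) + mu i * lam j
                  ≤ 3 * lam j ^2 + lam i ^2 := by
                rw [hmu]; dsimp only
                split_ifs <;> nlinarith [sq_nonneg (lam i + lam j), sq_nonneg (lam i), sq_nonneg (lam j)]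
              nlinarith [mul_le_mul_of_nonneg_right this hq]
          _ = 3 * ∑ i, (lam j * Q j i)^2 + ∑ i, (lam i * Q i j)^2 := by
              rw [Finset.sum_add_distrib, Finset.mul_sum]
          _ ≤ _ := by linarith
      · have hmj : mu j = 0 := by simp [hmu, hj]
        rw [if_neg hj, hmj]; simp
    have h := Finset.sum_le_sum fun j (_ : j ∈ Finset.univ) => this j
    rw [Finset.sum_comm] at h
    simp only [Finset.sum_add_distrib, Finset.sum_sub_distrib, ← Finset.mul_sum] at h
    refine h.trans ?_
    rw [← Finset.sum_filter, Finset.sum_const, nsmul_eq_mul]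
    have hc : (Finset.univ.filter (fun j : Fin n => (j : ℕ) < k)).card ≤ k := by
      have := Finset.card_le_card_of_injOn (s := Finset.univ.filter (fun j : Fin n => (j : ℕ) < k))
        (t := Finset.range k) (fun j : Fin n => (j : ℕ)) (by intro j hj; simpa using hj)
        (Fin.val_injective.injOn)
      simpa using this
    have hc' : ((Finset.univ.filter (fun j : Fin n => (j : ℕ) < k)).card : ℝ) ≤ k := by
      exact_mod_cast hc
    nlinarith [mul_le_mul_of_nonneg_right hc' hs]
  rw [e3]
  simp only [Finset.sum_sub_distrib, sq] at key ⊢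
  linarith

lemma aux_sum {n : ℕ} (W : Matrix (Fin n) (Fin n) ℝ) (a : Fin n → ℝ) :
    ∑ i, a i • Matrix.vecMulVec (W i) (W i) = Wᵀ * diagonal a * W := by
  ext p q
  simp only [Matrix.sum_apply, Matrix.smul_apply, Matrix.vecMulVec_apply, smul_eq_mul,
    Matrix.mul_apply (M := Wᵀ * diagonal a), Matrix.mul_diagonal, Matrix.transpose_apply]
  exact Finset.sum_congr rfl fun i _ => by ring

open scoped Matrix.Norms.L2Operator in
lemma aux_norm_conj {n : ℕ} (W M : Matrix (Fin n) (Fin n) ℝ) (hW : W * Wᵀ = 1) :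
    ‖W * M * Wᵀ‖ = ‖M‖ := by
  have hW' : Wᵀ * W = 1 := mul_eq_one_comm.mp hW
  have hu : W ∈ unitary (Matrix (Fin n) (Fin n) ℝ) := by
    rw [Unitary.mem_iff]
    simp only [Matrix.star_eq_conjTranspose, Matrix.conjTranspose_eq_transpose_of_trivial]
    exact ⟨hW', hW⟩
  have hu' : Wᵀ ∈ unitary (Matrix (Fin n) (Fin n) ℝ) := by
    have := Unitary.star_mem hu
    simpa only [Matrix.star_eq_conjTranspose, Matrix.conjTranspose_eq_transpose_of_trivial] using this
  rw [CStarRing.norm_mul_mem_unitary _ hu', CStarRing.norm_mem_unitary_mul _ hu]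

/-- Structured projections give low-rank approximation for symmetric matrices,
with constant (1 + 6ε). -/
theorem sf_projection_to_lra_symm {n : ℕ} (A : Matrix (Fin n) (Fin n) ℝ)
    (lam : Fin n → ℝ) (u : Fin n → (Fin n → ℝ))
    (hmono : Antitone (fun i => |lam i|))
    (hortho : ∀ i j, u i ⬝ᵥ u j = if i = j then (1:ℝ) else 0)
    (hA : A = ∑ i, lam i • Matrix.vecMulVec (u i) (u i))
    (k : ℕ) (hk : 1 ≤ k) (ε : ℝ) (hε : 0 < ε)
    (Ak : Matrix (Fin n) (Fin n) ℝ)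
    (hAk : Ak = ∑ i ∈ Finset.univ.filter (fun i : Fin n => (i : ℕ) < k),
      lam i • Matrix.vecMulVec (u i) (u i))
    (P : Matrix (Fin n) (Fin n) ℝ) (hPsymm : Pᵀ = P) (hPproj : P * P = P)
    (hP : (opNorm2 (A * (1 - P)))^2 ≤ (ε / k) * frobeniusSq (A - Ak)) :
    frobeniusSq (A - P * Ak * P) ≤ (1 + 6 * ε) * frobeniusSq (A - Ak) := by
  obtain ⟨W, rfl⟩ : ∃ W : Matrix (Fin n) (Fin n) ℝ, W = u := ⟨u, rfl⟩
  have hW : W * Wᵀ = 1 := by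
    ext i j
    rw [Matrix.one_apply, ← hortho i j]
    rfl
  have hW' : Wᵀ * W = 1 := mul_eq_one_comm.mp hW
  set mu : Fin n → ℝ := fun i : Fin n => if (i : ℕ) < k then lam i else 0 with hmu
  have hA2 : A = Wᵀ * diagonal lam * W := by rw [hA]; exact aux_sum W lam
  have hAk2 : Ak = Wᵀ * diagonal mu * W := by
    rw [hAk, ← aux_sum W mu, Finset.sum_filter]
    refine Finset.sum_congr rfl fun i _ => ?_
    rw [hmu]; dsimp only; split_ifs <;> simp
  set Q : Matrix (Fin n) (Fin n) ℝ := W * (1 - P) * Wᵀ with hQdef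
  have hPe : P = Wᵀ * (1 - Q) * W := by
    have : Wᵀ * Q * W = 1 - P := by
      calc _ = (Wᵀ * W) * (1 - P) * (Wᵀ * W) := by rw [hQdef]; simp only [Matrix.mul_assoc]
        _ = _ := by rw [hW']; simp
    rw [Matrix.mul_sub, Matrix.sub_mul, this, Matrix.mul_one, hW']; simp
  have hcancel : ∀ X Y : Matrix (Fin n) (Fin n) ℝ,
      Wᵀ * X * W * (Wᵀ * Y * W) = Wᵀ * (X * Y) * W := by
    intro X Y
    calc _ = Wᵀ * X * (W * Wᵀ) * (Y * W) := by simp only [Matrix.mul_assoc]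
      _ = _ := by rw [hW]; simp only [Matrix.mul_assoc, Matrix.mul_one]
  have hQ : Qᵀ = Q := by
    rw [hQdef]; simp [Matrix.transpose_mul, hPsymm, Matrix.mul_assoc]
  have hQQ : Q * Q = Q := by
    calc Q * Q = W * ((1 - P) * (Wᵀ * W) * (1 - P)) * Wᵀ := by
          rw [hQdef]; simp only [Matrix.mul_assoc]
      _ = Q := by
          have h1 : (1 - P) * (1 - P) = 1 - P := by simp [Matrix.mul_sub, Matrix.sub_mul, hPproj]
          rw [hW', Matrix.mul_one, h1]
  have hN : W * (A * (1 - P)) * Wᵀ = diagonal lam * Q := by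
    calc _ = (W * Wᵀ) * diagonal lam * (W * (1 - P) * Wᵀ) := by
          rw [hA2]; simp only [Matrix.mul_assoc]
      _ = _ := by rw [hW, Matrix.one_mul]
  have hnorm := aux_norm_conj W (A * (1 - P)) hW
  rw [hN, ← aux_opNorm2_eq (A * (1 - P))] at hnorm
  have hmain := aux_diag lam k (opNorm2 (A * (1 - P))^2) Q hQ hQQ
    (by intro j
        have := aux_col (diagonal lam * Q) j
        rw [hnorm] at this
        simpa [Matrix.diagonal_mul] using this)
    (by intro j
        have := aux_row (diagonal lam * Q) j
        rw [hnorm] at this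
        simpa [Matrix.diagonal_mul] using this) mu hmu (sq_nonneg _)
  have g1 : A - P * Ak * P = Wᵀ * (diagonal lam - (1 - Q) * diagonal mu * (1 - Q)) * W := by
    rw [hPe, hAk2, hcancel, hcancel]
    generalize (1 - Q) * diagonal mu * (1 - Q) = Z
    rw [Matrix.mul_sub, Matrix.sub_mul, ← hA2]
  have g2 : A - Ak = Wᵀ * (diagonal lam - diagonal mu) * W := by
    rw [hAk2, Matrix.mul_sub, Matrix.sub_mul, ← hA2]
  have f1 := aux_frob_conj W (diagonal lam - (1 - Q) * diagonal mu * (1 - Q)) hW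
  have f2 := aux_frob_conj W (diagonal lam - diagonal mu) hW
  rw [← g1] at f1
  rw [← g2] at f2
  rw [← f1, ← f2] at hmain
  have hE : 0 ≤ frobeniusSq (A - Ak) :=
    Finset.sum_nonneg fun i _ => Finset.sum_nonneg fun j _ => sq_nonneg _
  have hk0 : (0:ℝ) < k := by exact_mod_cast hk
  have h5 : k * opNorm2 (A * (1 - P))^2 ≤ ε * frobeniusSq (A - Ak) := by
    calc _ ≤ k * ((ε / k) * frobeniusSq (A - Ak)) := mul_le_mul_of_nonneg_left hP hk0.le
      _ = _ := by field_simp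
  nlinarith [mul_nonneg hε.le hE]
end

section
/- Let x₁,…,xₙ ∈ ℝ^d and define the negative-type distance matrix A ∈ ℝ^{n×n} by A_{ij} = ‖xᵢ − xⱼ‖₂², the Gram matrix B by B_{ij} = ⟨xᵢ, xⱼ⟩, and the vector v ∈ ℝⁿ by vᵢ = ‖xᵢ‖₂², so that A = v𝟙ᵀ + 𝟙vᵀ − 2B, where 𝟙 is the all-ones vector. Let k ≥ 1 be an integer and ε > 0. Let P ∈ ℝ^{n×n} be an orthogonal projection (P = Pᵀ = P²) with P𝟙 = 𝟙, Pv = v, and ‖B(I − P)‖₂² ≤ (ε/k) · inf{ ‖B − M‖_F² : M ∈ ℝ^{n×n}, rank(M) ≤ k+2 }. Then ‖A − P A_k P‖_F² ≤ (1 + 6ε) · ‖A − A_k‖_F², where A_k is the rank-k spectral truncation of the symmetric matrix A obtained by keeping the k eigenvalues of largest absolute value. -/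
open Matrix

lemma frob_eq_trace {n : ℕ} (M : Matrix (Fin n) (Fin n) ℝ) :
    frobeniusSq M = trace (Mᵀ * M) := by
  simp only [frobeniusSq, trace, Matrix.mul_apply, Matrix.diag_apply, Matrix.transpose_apply]
  rw [Finset.sum_comm]
  simp only [sq]

lemma frob_nonneg {m n : ℕ} (M : Matrix (Fin m) (Fin n) ℝ) : 0 ≤ frobeniusSq M :=
  Finset.sum_nonneg fun _ _ => Finset.sum_nonneg fun _ _ => sq_nonneg _

lemma opNorm_dot {n : ℕ} (M : Matrix (Fin n) (Fin n) ℝ) (y : Fin n → ℝ) :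
    (M *ᵥ y) ⬝ᵥ (M *ᵥ y) ≤ (opNorm2 M)^2 * (y ⬝ᵥ y) := by
  have h := (LinearMap.toContinuousLinearMap (Matrix.toEuclideanLin M)).le_opNorm (WithLp.toLp 2 y)
  have h2 := pow_le_pow_left₀ (norm_nonneg _) h 2
  rw [mul_pow, EuclideanSpace.norm_sq_eq, EuclideanSpace.norm_sq_eq] at h2
  simpa [opNorm2, dotProduct, sq, Matrix.toLpLin_apply] using h2

lemma my_rank_add_le {n : ℕ} (M N : Matrix (Fin n) (Fin n) ℝ) :
    (M + N).rank ≤ M.rank + N.rank := by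
  rw [Matrix.rank, Matrix.rank, Matrix.rank, Matrix.mulVecLin_add]
  refine (Submodule.finrank_mono (LinearMap.range_add_le _ _)).trans ?_
  exact Submodule.finrank_add_le_finrank_add_finrank _ _

lemma rank_sum_le {n : ℕ} (s : Finset (Fin n)) (lam : Fin n → ℝ) (u : Fin n → (Fin n → ℝ)) :
    (∑ i ∈ s, lam i • Matrix.vecMulVec (u i) (u i)).rank ≤ s.card := by
  classical
  induction s using Finset.induction_on with
  | empty => simp
  | insert a s ha ih =>
    rw [Finset.sum_insert ha, Finset.card_insert_of_notMem ha]
    refine (my_rank_add_le _ _).trans ?_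
    have : (lam a • Matrix.vecMulVec (u a) (u a)).rank ≤ 1 := by
      rw [← Matrix.smul_vecMulVec]; exact Matrix.rank_vecMulVec_le _ _
    omega

lemma sum_mulVec_eig {n : ℕ} (s : Finset (Fin n)) (lam : Fin n → ℝ) (u : Fin n → (Fin n → ℝ))
    (hortho : ∀ i j, u i ⬝ᵥ u j = if i = j then (1:ℝ) else 0) (j : Fin n) :
    (∑ i ∈ s, lam i • Matrix.vecMulVec (u i) (u i)) *ᵥ u j = if j ∈ s then lam j • u j else 0 := by
  classical
  rw [Matrix.sum_mulVec]
  simp only [Matrix.smul_mulVec, Matrix.vecMulVec_mulVec, hortho]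
  rw [← Finset.sum_ite_eq' s j (fun i => lam i • u i)]
  refine Finset.sum_congr rfl fun i _ => ?_
  split_ifs <;> ext <;> simp

lemma sum_symm {n : ℕ} (s : Finset (Fin n)) (lam : Fin n → ℝ) (u : Fin n → (Fin n → ℝ)) :
    (∑ i ∈ s, lam i • Matrix.vecMulVec (u i) (u i))ᵀ =
      ∑ i ∈ s, lam i • Matrix.vecMulVec (u i) (u i) := by
  rw [Matrix.transpose_sum]
  simp [Matrix.transpose_vecMulVec]

lemma trace_sum_mul {n : ℕ} (s : Finset (Fin n)) (lam : Fin n → ℝ) (u : Fin n → (Fin n → ℝ))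
    (N : Matrix (Fin n) (Fin n) ℝ) :
    trace (N * (∑ i ∈ s, lam i • Matrix.vecMulVec (u i) (u i))) =
      ∑ i ∈ s, lam i * (u i ⬝ᵥ (N *ᵥ u i)) := by
  rw [Finset.mul_sum, Matrix.trace_sum]
  refine Finset.sum_congr rfl fun i _ => ?_
  rw [Matrix.mul_smul, Matrix.trace_smul, Matrix.mul_vecMulVec, Matrix.trace_vecMulVec,
    dotProduct_comm, smul_eq_mul]

lemma symm_dot {n : ℕ} {M : Matrix (Fin n) (Fin n) ℝ} (h : Mᵀ = M) (a b : Fin n → ℝ) :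
    (M *ᵥ a) ⬝ᵥ b = a ⬝ᵥ (M *ᵥ b) := by
  rw [Matrix.dotProduct_mulVec, ← Matrix.mulVec_transpose, h]

lemma dot_cs {n : ℕ} (a b : Fin n → ℝ) : (a ⬝ᵥ b)^2 ≤ (a ⬝ᵥ a) * (b ⬝ᵥ b) := by
  simpa [dotProduct, sq] using Finset.sum_mul_sq_le_sq_mul_sq Finset.univ a b

lemma dot_self_nn {n : ℕ} (a : Fin n → ℝ) : 0 ≤ a ⬝ᵥ a :=
  Finset.sum_nonneg fun _ _ => mul_self_nonneg _

/-- Abstract core. -/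
lemma core_bound {n : ℕ} (s : Finset (Fin n)) (lam : Fin n → ℝ) (u : Fin n → (Fin n → ℝ))
    (hortho : ∀ i j, u i ⬝ᵥ u j = if i = j then (1:ℝ) else 0)
    (A K Q : Matrix (Fin n) (Fin n) ℝ)
    (hA : A = ∑ i, lam i • Matrix.vecMulVec (u i) (u i))
    (hK : K = ∑ i ∈ s, lam i • Matrix.vecMulVec (u i) (u i))
    (hQs : Qᵀ = Q) (hQ : Q * Q = Q) (δ : ℝ) (hδ : 0 ≤ δ)
    (hAQ : ∀ y, ((A * Q) *ᵥ y) ⬝ᵥ ((A * Q) *ᵥ y) ≤ δ * (y ⬝ᵥ y)) :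
    frobeniusSq (A - (1 - Q) * K * (1 - Q)) ≤ frobeniusSq (A - K) + 4 * (s.card * δ) := by
  classical
  have hAs : Aᵀ = A := by rw [hA]; exact sum_symm _ _ _
  have hKs : Kᵀ = K := by rw [hK]; exact sum_symm _ _ _
  obtain ⟨E, hE⟩ : ∃ E, E = A - K := ⟨_, rfl⟩
  have hEs : Eᵀ = E := by rw [hE, transpose_sub, hAs, hKs]
  have hAe : A = E + K := by rw [hE]; abel
  have hAu : ∀ j, A *ᵥ u j = lam j • u j := fun j => by
    rw [hA, sum_mulVec_eig _ _ _ hortho]; simp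
  have hKu : ∀ j ∈ s, K *ᵥ u j = lam j • u j := fun j hj => by
    rw [hK, sum_mulVec_eig _ _ _ hortho, if_pos hj]
  have hEK : E * K = 0 := by
    rw [hK, Finset.mul_sum]
    refine Finset.sum_eq_zero fun i hi => ?_
    rw [Matrix.mul_smul, Matrix.mul_vecMulVec, hE, Matrix.sub_mulVec, hAu, hKu i hi, sub_self]
    ext; simp [vecMulVec]
  have hKE : K * E = 0 := by
    have := congrArg transpose hEK
    rwa [transpose_mul, hKs, hEs, transpose_zero] at this
  -- E contraction
  have hEz : ∀ z, (E *ᵥ z) ⬝ᵥ (E *ᵥ z) ≤ (A *ᵥ z) ⬝ᵥ (A *ᵥ z) := fun z => by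
    have h0 : (E *ᵥ z) ⬝ᵥ (K *ᵥ z) = 0 := by
      rw [symm_dot hEs, Matrix.mulVec_mulVec, hEK]; simp
    rw [hAe, Matrix.add_mulVec, add_dotProduct, dotProduct_add, dotProduct_add,
      dotProduct_comm (K *ᵥ z) (E *ᵥ z), h0]
    linarith [dot_self_nn (K *ᵥ z)]
  have hQQ : ∀ y, Q *ᵥ (Q *ᵥ y) = Q *ᵥ y := fun y => by rw [Matrix.mulVec_mulVec, hQ]
  have hqdef : ∀ y, (Q *ᵥ y) ⬝ᵥ (Q *ᵥ y) = y ⬝ᵥ (Q *ᵥ y) := fun y => by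
    rw [symm_dot hQs, hQQ]
  have hAQ' : ∀ y, (A *ᵥ (Q *ᵥ y)) ⬝ᵥ (A *ᵥ (Q *ᵥ y)) ≤ δ * (y ⬝ᵥ (Q *ᵥ y)) := fun y => by
    have := hAQ (Q *ᵥ y)
    rwa [← Matrix.mulVec_mulVec, hQQ, hqdef] at this
  have hq0 : ∀ i, 0 ≤ u i ⬝ᵥ (Q *ᵥ u i) := fun i => by rw [← hqdef]; exact dot_self_nn _
  have huu : ∀ i, u i ⬝ᵥ u i = 1 := fun i => by simp [hortho]
  have hq1 : ∀ i, u i ⬝ᵥ (Q *ᵥ u i) ≤ 1 := fun i => by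
    have := dot_cs (u i) (Q *ᵥ u i)
    rw [huu, hqdef] at this
    nlinarith [hq0 i]
  have b1 : ∀ i, lam i ^ 2 * (u i ⬝ᵥ (Q *ᵥ u i)) ≤ δ := fun i => by
    have h1 := dot_cs (u i) (A *ᵥ (Q *ᵥ u i))
    rw [huu, ← symm_dot hAs, hAu, smul_dotProduct, smul_eq_mul] at h1
    have h2 := hAQ' (u i)
    rcases (hq0 i).eq_or_lt with h | h
    · rw [← h]; simpa using hδ
    · refine le_of_mul_le_mul_right ?_ h
      nlinarith
  have b2 : ∀ i, -δ ≤ lam i * (u i ⬝ᵥ ((Q * E * Q) *ᵥ u i)) := fun i => by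
    have e : u i ⬝ᵥ ((Q * E * Q) *ᵥ u i) = (Q *ᵥ u i) ⬝ᵥ (E *ᵥ (Q *ᵥ u i)) := by
      rw [symm_dot hQs, Matrix.mulVec_mulVec, Matrix.mulVec_mulVec, Matrix.mul_assoc]
    rw [e]
    have h1 := dot_cs (Q *ᵥ u i) (E *ᵥ (Q *ᵥ u i))
    rw [hqdef] at h1
    have h2 := (hEz (Q *ᵥ u i)).trans (hAQ' (u i))
    have h3 : δ * (u i ⬝ᵥ (Q *ᵥ u i)) ≤ δ := by nlinarith [hq1 i]
    have h4 := h2.trans h3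
    have h5 : (lam i * ((Q *ᵥ u i) ⬝ᵥ (E *ᵥ (Q *ᵥ u i))))^2 ≤ δ^2 := by
      calc _ = lam i ^2 * ((Q *ᵥ u i) ⬝ᵥ (E *ᵥ (Q *ᵥ u i)))^2 := by ring
        _ ≤ lam i ^2 * ((u i ⬝ᵥ (Q *ᵥ u i)) * ((E *ᵥ (Q *ᵥ u i)) ⬝ᵥ (E *ᵥ (Q *ᵥ u i)))) := by
            gcongr
        _ = (lam i ^2 * (u i ⬝ᵥ (Q *ᵥ u i))) * ((E *ᵥ (Q *ᵥ u i)) ⬝ᵥ (E *ᵥ (Q *ᵥ u i))) := by ring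
        _ ≤ δ * δ := mul_le_mul (b1 i) h4 (dot_self_nn _) hδ
        _ = δ^2 := by ring
    exact (abs_le.mp (abs_le_of_sq_le_sq h5 hδ)).1
  have t1 : trace (K * Q * K) ≤ s.card * δ := by
    have : trace (K * Q * K) = ∑ i ∈ s, lam i * (u i ⬝ᵥ ((K * Q) *ᵥ u i)) := by
      conv_lhs => rw [show K * Q * K = (K * Q) * ∑ i ∈ s, lam i • Matrix.vecMulVec (u i) (u i) by
        rw [← hK]]
      exact trace_sum_mul _ _ _ _
    rw [this, ← nsmul_eq_mul]
    refine Finset.sum_le_card_nsmul _ _ _ fun i hi => ?_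
    rw [← Matrix.mulVec_mulVec, ← symm_dot hKs, hKu i hi, smul_dotProduct, smul_eq_mul]
    have := b1 i
    linarith
  have t2 : -(s.card * δ) ≤ trace (Q * E * Q * K) := by
    have : trace (Q * E * Q * K) = ∑ i ∈ s, lam i * (u i ⬝ᵥ ((Q * E * Q) *ᵥ u i)) := by
      rw [hK]; exact trace_sum_mul _ _ _ _
    rw [this, ← mul_neg, ← nsmul_eq_mul]
    exact Finset.card_nsmul_le_sum _ _ _ fun i _ => b2 i
  have t3 : 0 ≤ trace (Q * K * Q * K) := by
    have h := frob_nonneg (Q * K * Q)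
    rw [frob_eq_trace] at h
    have : trace ((Q * K * Q)ᵀ * (Q * K * Q)) = trace (Q * K * Q * K) := by
      simp only [transpose_mul, hQs, hKs]
      rw [show Q * (K * Q) * (Q * K * Q) = Q * (K * (Q * Q) * K * Q) by noncomm_ring, hQ,
        Matrix.trace_mul_comm, show K * Q * K * Q * Q = K * Q * K * (Q * Q) by noncomm_ring, hQ,
        show K * Q * K * Q = K * (Q * K * Q) by noncomm_ring, Matrix.trace_mul_comm]
    linarith
  have key : frobeniusSq (A - (1 - Q) * K * (1 - Q)) =
      frobeniusSq (A - K) - 2 * trace (Q * E * Q * K) + 2 * trace (K * Q * K)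
        - trace (Q * K * Q * K) := by
    rw [← hE, frob_eq_trace, frob_eq_trace]
    have e1 : A - (1 - Q) * K * (1 - Q) = E + (Q * K + K * Q - Q * K * Q) := by
      rw [hAe]; noncomm_ring
    rw [e1]
    have e2 : (E + (Q * K + K * Q - Q * K * Q))ᵀ = E + (Q * K + K * Q - Q * K * Q) := by
      simp only [transpose_add, transpose_sub, transpose_mul, hQs, hKs, hEs]
      noncomm_ring
    rw [e2, hEs]
    have e3 : (E + (Q * K + K * Q - Q * K * Q)) * (E + (Q * K + K * Q - Q * K * Q)) =
      E * E + E * Q * K + (E * K) * Q - E * (Q * K * Q) + Q * (K * E) + K * (Q * E)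
        - (Q * K * Q) * E
        + (Q * K * Q * K + Q * K * K * Q - Q * K * (Q * K * Q) + K * (Q * Q) * K + K * Q * K * Q
          - K * (Q * Q) * K * Q - Q * K * (Q * Q) * K - Q * K * Q * K * Q
            + Q * K * (Q * Q) * K * Q) := by noncomm_ring
    rw [e3, hQ, hEK, hKE]
    have c1 : trace (E * Q * K) = 0 := by
      rw [Matrix.trace_mul_comm, ← Matrix.mul_assoc, hKE]; simp
    have c2 : trace (K * (Q * E)) = 0 := by
      rw [Matrix.trace_mul_comm, Matrix.mul_assoc, hEK]; simp
    have c3 : trace (E * (Q * K * Q)) = trace (Q * E * Q * K) := by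
      rw [show E * (Q * K * Q) = (E * Q * K) * Q by noncomm_ring, Matrix.trace_mul_comm]
      simp only [Matrix.mul_assoc]
    have c4 : trace (Q * K * Q * E) = trace (Q * E * Q * K) := by
      rw [show Q * K * Q * E = (Q * K) * (Q * E) by noncomm_ring, Matrix.trace_mul_comm]
      simp only [Matrix.mul_assoc]
    have c5 : trace (Q * K * K * Q) = trace (K * Q * K) := by
      rw [Matrix.trace_mul_comm, show Q * (Q * K * K) = (Q * Q) * K * K by noncomm_ring, hQ,
        Matrix.trace_mul_comm, Matrix.mul_assoc]
    have c6 : trace (K * Q * K * Q) = trace (Q * K * Q * K) := by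
      rw [Matrix.trace_mul_comm]; simp only [Matrix.mul_assoc]
    have c7 : trace (Q * K * Q * K * Q) = trace (Q * K * Q * K) := by
      rw [Matrix.trace_mul_comm, show Q * (Q * K * Q * K) = (Q * Q) * K * Q * K by noncomm_ring, hQ]
    have c8 : trace (Q * K * (Q * K * Q)) = trace (Q * K * Q * K) := by
      rw [← c7]; simp only [Matrix.mul_assoc]
    simp only [trace_add, trace_sub, Matrix.zero_mul, Matrix.mul_zero, trace_zero, c1, c2, c3, c4,
      c5, c6, c7, c8]
    ring
  rw [key]
  linarith

/-- Structured projections for negative-type distance matrices. -/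
theorem sf_projection_distance_matrix {n d : ℕ} (x : Fin n → (Fin d → ℝ))
    (A B : Matrix (Fin n) (Fin n) ℝ) (v : Fin n → ℝ)
    (hAdef : ∀ i j, A i j = ∑ l, (x i l - x j l)^2)
    (hBdef : ∀ i j, B i j = ∑ l, (x i l) * (x j l))
    (hvdef : ∀ i, v i = ∑ l, (x i l)^2)
    (k : ℕ) (hk : 1 ≤ k) (ε : ℝ) (hε : 0 < ε)
    (lam : Fin n → ℝ) (u : Fin n → (Fin n → ℝ))
    (hmono : Antitone (fun i => |lam i|))
    (hortho : ∀ i j, u i ⬝ᵥ u j = if i = j then (1:ℝ) else 0)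
    (hAeig : A = ∑ i, lam i • Matrix.vecMulVec (u i) (u i))
    (Ak : Matrix (Fin n) (Fin n) ℝ)
    (hAk : Ak = ∑ i ∈ Finset.univ.filter (fun i : Fin n => (i : ℕ) < k),
      lam i • Matrix.vecMulVec (u i) (u i))
    (P : Matrix (Fin n) (Fin n) ℝ) (hPsymm : Pᵀ = P) (hPproj : P * P = P)
    (hPone : P.mulVec (fun _ => 1) = fun _ => 1) (hPv : P.mulVec v = v)
    (hspec : (opNorm2 (B * (1 - P)))^2 ≤ (ε / k) *
      sInf {r : ℝ | ∃ M : Matrix (Fin n) (Fin n) ℝ, M.rank ≤ k + 2 ∧ r = frobeniusSq (B - M)}) :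
    frobeniusSq (A - P * Ak * P) ≤ (1 + 6 * ε) * frobeniusSq (A - Ak) := by
  have hcard : (Finset.univ.filter (fun i : Fin n => (i : ℕ) < k)).card ≤ k := by
    have := Finset.card_le_card_of_injOn (s := Finset.univ.filter (fun i : Fin n => (i : ℕ) < k))
      (t := Finset.range k) (fun i => (i : ℕ)) (by intro i; simp)
      (Fin.val_injective.injOn)
    simpa using this
  have hk0 : (0:ℝ) < k := by exact_mod_cast hk
  obtain ⟨o, ho⟩ : ∃ o : Fin n → ℝ, o = fun _ => 1 := ⟨_, rfl⟩
  rw [← ho] at hPone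
  have hAB : A = vecMulVec v o + vecMulVec o v - (2:ℝ) • B := by
    ext i j
    simp only [Matrix.sub_apply, Matrix.add_apply, Matrix.smul_apply, vecMulVec_apply, ho, hAdef,
      hBdef, hvdef, smul_eq_mul, mul_one, one_mul, Finset.mul_sum]
    rw [← Finset.sum_add_distrib, ← Finset.sum_sub_distrib]
    exact Finset.sum_congr rfl fun l _ => by ring
  have hT := frob_nonneg (A - Ak)
  have hinf : sInf {r : ℝ | ∃ M : Matrix (Fin n) (Fin n) ℝ, M.rank ≤ k + 2 ∧
      r = frobeniusSq (B - M)} ≤ frobeniusSq (A - Ak) / 4 := by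
    refine csInf_le ⟨0, ?_⟩ ⟨vecMulVec ((1/2:ℝ) • v) o + vecMulVec ((1/2:ℝ) • o) v
      + ∑ i ∈ Finset.univ.filter (fun i : Fin n => (i : ℕ) < k),
        ((-(1/2:ℝ)) * lam i) • Matrix.vecMulVec (u i) (u i), ?_, ?_⟩
    · rintro r ⟨M, _, rfl⟩; exact frob_nonneg _
    · refine (my_rank_add_le _ _).trans ?_
      have h1 := my_rank_add_le (vecMulVec ((1/2:ℝ) • v) o) (vecMulVec ((1/2:ℝ) • o) v)
      have h2 := rank_vecMulVec_le ((1/2:ℝ) • v) o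
      have h3 := rank_vecMulVec_le ((1/2:ℝ) • o) v
      have h4 := rank_sum_le (Finset.univ.filter (fun i : Fin n => (i : ℕ) < k))
        (fun i => (-(1/2:ℝ)) * lam i) u
      omega
    · have : B - (vecMulVec ((1/2:ℝ) • v) o + vecMulVec ((1/2:ℝ) • o) v
        + ∑ i ∈ Finset.univ.filter (fun i : Fin n => (i : ℕ) < k),
        ((-(1/2:ℝ)) * lam i) • Matrix.vecMulVec (u i) (u i)) = (-(1/2:ℝ)) • (A - Ak) := by
        simp only [mul_smul]
        rw [← Finset.smul_sum, ← hAk, hAB]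
        ext i j
        simp [vecMulVec_apply]
        ring
      rw [this]
      simp only [frobeniusSq, Matrix.smul_apply, smul_eq_mul, mul_pow, ← Finset.mul_sum]
      ring
  have hAQ : A * (1 - P) = (-2:ℝ) • (B * (1 - P)) := by
    have z : ∀ w a : Fin n → ℝ, P *ᵥ w = w → vecMulVec a w * (1 - P) = 0 := fun w a hw => by
      rw [vecMulVec_mul, vecMul_sub, vecMul_one, ← hPsymm, vecMul_transpose, hw, sub_self]
      ext; simp [vecMulVec]
    rw [hAB, Matrix.sub_mul, Matrix.add_mul, z _ _ hPone, z _ _ hPv, Matrix.smul_mul]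
    simp
  have hd : 0 ≤ ε / k * frobeniusSq (A - Ak) := by positivity
  have hop : 4 * (opNorm2 (B * (1 - P)))^2 ≤ ε / k * frobeniusSq (A - Ak) := by
    have : ε / k * _ ≤ ε / k * _ := mul_le_mul_of_nonneg_left hinf (by positivity)
    linarith
  have main := core_bound _ lam u hortho A Ak (1 - P) hAeig hAk
    (by rw [transpose_sub, transpose_one, hPsymm])
    (by rw [show (1 - P) * (1 - P) = 1 - P - P + P * P by noncomm_ring, hPproj]; abel)
    (ε / k * frobeniusSq (A - Ak)) hd (fun y => by
      rw [hAQ, smul_mulVec, smul_dotProduct, dotProduct_smul, smul_eq_mul, smul_eq_mul]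
      have h1 := opNorm_dot (B * (1 - P)) y
      have h2 := mul_le_mul_of_nonneg_right hop (dot_self_nn y)
      linarith)
  rw [sub_sub_cancel] at main
  refine main.trans ?_
  have h1 : ((Finset.univ.filter (fun i : Fin n => (i : ℕ) < k)).card : ℝ) *
      (ε / k * frobeniusSq (A - Ak)) ≤ k * (ε / k * frobeniusSq (A - Ak)) :=
    mul_le_mul_of_nonneg_right (by exact_mod_cast hcard) hd
  have h2 : (k:ℝ) * (ε / k * frobeniusSq (A - Ak)) = ε * frobeniusSq (A - Ak) := by
    field_simp
  have h3 : 0 ≤ ε * frobeniusSq (A - Ak) := by positivity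
  linarith
end

section
/- Let x₁,…,xₙ ∈ ℝ^d and define A ∈ ℝ^{n×n} by A_{ij} = ‖xᵢ − xⱼ‖₂², B by B_{ij} = ⟨xᵢ, xⱼ⟩, and v ∈ ℝⁿ by vᵢ = ‖xᵢ‖₂², so that A = v𝟙ᵀ + 𝟙vᵀ − 2B, where 𝟙 is the all-ones vector. Then for every integer k ≥ 0 and every matrix M ∈ ℝ^{n×n} with rank(M) ≤ k, ‖A − M‖_F ≥ 2 · inf{ ‖B − M'‖_F : M' ∈ ℝ^{n×n}, rank(M') ≤ k+2 }. -/
open Matrix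

theorem aux_rank_add {n : ℕ} (P Q : Matrix (Fin n) (Fin n) ℝ) :
    (P + Q).rank ≤ P.rank + Q.rank := by
  unfold Matrix.rank
  rw [Matrix.mulVecLin_add]
  refine le_trans (Submodule.finrank_mono (LinearMap.range_add_le _ _)) ?_
  exact Submodule.finrank_add_le_finrank_add_finrank _ _

theorem aux_rank_smul {n : ℕ} (c : ℝ) (P : Matrix (Fin n) (Fin n) ℝ) :
    (c • P).rank ≤ P.rank := by
  have : c • P = (c • (1 : Matrix (Fin n) (Fin n) ℝ)) * P := by simp
  rw [this]
  exact Matrix.rank_mul_le_right _ _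

/-- For a negative-type distance matrix A with Gram matrix B, any rank-k approximation
error of A is at least twice the best rank-(k+2) approximation error of B. -/
theorem distance_matrix_lra_lower_bound {n d : ℕ} (x : Fin n → (Fin d → ℝ))
    (A B : Matrix (Fin n) (Fin n) ℝ) (v : Fin n → ℝ)
    (hAdef : ∀ i j, A i j = ∑ l, (x i l - x j l)^2)
    (hBdef : ∀ i j, B i j = ∑ l, (x i l) * (x j l))
    (hvdef : ∀ i, v i = ∑ l, (x i l)^2)
    (k : ℕ) (M : Matrix (Fin n) (Fin n) ℝ) (hM : M.rank ≤ k) :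
    2 * sInf {r : ℝ | ∃ M' : Matrix (Fin n) (Fin n) ℝ,
        M'.rank ≤ k + 2 ∧ r = Real.sqrt (frobeniusSq (B - M'))} ≤
      Real.sqrt (frobeniusSq (A - M)) := by
  set M' : Matrix (Fin n) (Fin n) ℝ :=
    (1 / 2 : ℝ) • (vecMulVec v (fun _ => 1) + vecMulVec (fun _ => 1) v + (-1 : ℝ) • M) with hM'
  have hr : M'.rank ≤ k + 2 := by
    have h1 := aux_rank_smul (1 / 2 : ℝ)
      (vecMulVec v (fun _ => 1) + vecMulVec (fun _ => 1) v + (-1 : ℝ) • M)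
    have h2 := aux_rank_add (vecMulVec v (fun _ => 1) + vecMulVec (fun _ => 1) v) ((-1 : ℝ) • M)
    have h3 := aux_rank_add (vecMulVec v (fun _ => 1)) (vecMulVec (fun _ => 1) v)
    have h4 := aux_rank_smul (-1 : ℝ) M
    have h5 := Matrix.rank_vecMulVec_le v (fun _ : Fin n => (1 : ℝ))
    have h6 := Matrix.rank_vecMulVec_le (fun _ : Fin n => (1 : ℝ)) v
    rw [hM']
    omega
  have hA : ∀ i j, A i j = v i + v j - 2 * B i j := by
    intro i j
    rw [hAdef, hBdef, hvdef, hvdef, Finset.mul_sum, ← Finset.sum_add_distrib,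
      ← Finset.sum_sub_distrib]
    exact Finset.sum_congr rfl fun l _ => by ring
  have hF : frobeniusSq (A - M) = 2 ^ 2 * frobeniusSq (B - M') := by
    unfold frobeniusSq
    rw [Finset.mul_sum]
    refine Finset.sum_congr rfl fun i _ => ?_
    rw [Finset.mul_sum]
    refine Finset.sum_congr rfl fun j _ => ?_
    simp only [hM', Matrix.sub_apply, Matrix.smul_apply, Matrix.add_apply, vecMulVec_apply,
      smul_eq_mul, hA]
    ring
  rw [hF, Real.sqrt_mul (by positivity), Real.sqrt_sq (by norm_num)]
  refine mul_le_mul_of_nonneg_left (csInf_le ⟨0, ?_⟩ ⟨M', hr, rfl⟩) (by norm_num)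
  rintro r ⟨N, _, rfl⟩
  exact Real.sqrt_nonneg _
end

section
/- Let A be an n×n real positive semidefinite matrix with eigenvalues λ₁ ≥ λ₂ ≥ … ≥ λₙ ≥ 0, let λ > 0, and let s_λ = Σ_{i=1}^n λᵢ² / (λᵢ² + λ) be the statistical dimension of A at regularization λ. Then for every integer k with 0 ≤ k < n, the tail sum of squared eigenvalues satisfies Σ_{i=k+1}^n λᵢ² ≤ s_λ · (λ_{k+1}² + λ). -/
open Matrix

/-- Tail sum of squared eigenvalues of a PSD matrix is bounded by the statistical
dimension times (λ_{k+1}² + λ). -/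
theorem tail_eigenvalue_sum_le_statDim {n : ℕ} (A : Matrix (Fin n) (Fin n) ℝ)
    (lam : Fin n → ℝ) (u : Fin n → (Fin n → ℝ))
    (hmono : Antitone lam) (hnonneg : ∀ i, 0 ≤ lam i)
    (hortho : ∀ i j, u i ⬝ᵥ u j = if i = j then (1:ℝ) else 0)
    (hA : A = ∑ i, lam i • Matrix.vecMulVec (u i) (u i))
    (lamreg : ℝ) (hlamreg : 0 < lamreg)
    (s : ℝ) (hs : s = ∑ i, (lam i)^2 / ((lam i)^2 + lamreg))
    (k : ℕ) (hk : k < n) :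
    ∑ i ∈ Finset.univ.filter (fun i : Fin n => k ≤ (i : ℕ)), (lam i)^2 ≤
      s * ((lam ⟨k, hk⟩)^2 + lamreg) := by
  subst hs
  rw [Finset.sum_mul]
  have hpos : ∀ i, 0 < (lam i)^2 + lamreg := fun i => by positivity
  refine le_trans (Finset.sum_le_sum (fun i hi => ?_))
    (Finset.sum_le_sum_of_subset_of_nonneg (Finset.filter_subset _ _) (fun i _ _ => ?_))
  · have hki : k ≤ (i : ℕ) := (Finset.mem_filter.mp hi).2
    have h1 : lam i ≤ lam ⟨k, hk⟩ := hmono (Fin.mk_le_of_le_val hki)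
    have h2 : (lam i)^2 ≤ (lam ⟨k, hk⟩)^2 := pow_le_pow_left₀ (hnonneg i) h1 2
    rw [div_mul_eq_mul_div, le_div_iff₀ (hpos i)]
    exact mul_le_mul_of_nonneg_left (by linarith) (sq_nonneg _)
  · exact mul_nonneg (div_nonneg (sq_nonneg _) (hpos i).le) (hpos _).le
end

section
/- Let A be an n×n real positive semidefinite matrix with eigenvalues λ₁ ≥ λ₂ ≥ … ≥ λₙ ≥ 0, let λ > 0, and let s_λ = Σ_{i=1}^n λᵢ² / (λᵢ² + λ). Let 0 < ε < 1 and let k be an integer with 0 ≤ k < n and (k+1) · ε² ≥ s_λ. Then λ_{k+1}² ≤ ε² λ / (1 − ε²). -/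
open Matrix

/-- If (k+1)·ε² ≥ s_λ then the (k+1)-st eigenvalue of a PSD matrix satisfies
λ_{k+1}² ≤ ε²λ/(1−ε²). -/
theorem eigenvalue_bound_from_statDim {n : ℕ} (A : Matrix (Fin n) (Fin n) ℝ)
    (lam : Fin n → ℝ) (u : Fin n → (Fin n → ℝ))
    (hmono : Antitone lam) (hnonneg : ∀ i, 0 ≤ lam i)
    (hortho : ∀ i j, u i ⬝ᵥ u j = if i = j then (1:ℝ) else 0)
    (hA : A = ∑ i, lam i • Matrix.vecMulVec (u i) (u i))
    (lamreg : ℝ) (hlamreg : 0 < lamreg)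
    (s : ℝ) (hs : s = ∑ i, (lam i)^2 / ((lam i)^2 + lamreg))
    (ε : ℝ) (hε : 0 < ε) (hε1 : ε < 1)
    (k : ℕ) (hk : k < n) (hks : s ≤ ((k : ℝ) + 1) * ε^2) :
    (lam ⟨k, hk⟩)^2 ≤ ε^2 * lamreg / (1 - ε^2) := by
  have hterm : ∀ i, 0 ≤ (lam i)^2 / ((lam i)^2 + lamreg) := fun i => by positivity
  have hlow : ∀ i ∈ Finset.Iic (⟨k, hk⟩ : Fin n),
      (lam ⟨k, hk⟩)^2 / ((lam ⟨k, hk⟩)^2 + lamreg) ≤ (lam i)^2 / ((lam i)^2 + lamreg) := by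
    intro i hi
    have h1 : lam ⟨k, hk⟩ ≤ lam i := hmono (Finset.mem_Iic.mp hi)
    have h2 : (lam ⟨k, hk⟩)^2 ≤ (lam i)^2 := pow_le_pow_left₀ (hnonneg _) h1 2
    rw [div_le_div_iff₀ (by positivity) (by positivity)]
    nlinarith
  have h3 := Finset.card_nsmul_le_sum _ _ _ hlow
  have h4 : ∑ i ∈ Finset.Iic (⟨k, hk⟩ : Fin n), (lam i)^2 / ((lam i)^2 + lamreg) ≤ s := by
    rw [hs]
    exact Finset.sum_le_sum_of_subset_of_nonneg (Finset.subset_univ _) (fun i _ _ => hterm i)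
  rw [Fin.card_Iic, nsmul_eq_mul] at h3
  push_cast at h3
  have h5 := (h3.trans h4).trans hks
  have h6 := le_of_mul_le_mul_left h5 (by positivity)
  rw [div_le_iff₀ (by positivity)] at h6
  rw [le_div_iff₀ (by nlinarith)]
  linarith
end

section
/- Let n ≥ 1 be an integer and let ε, η be reals with 0 < η ≤ ε/2. Let S ⊆ {1,…,n} with |S| ≥ 5ε/η. Define the n×n real matrix M by M_{ii} = 1 for all i, M_{ij} = η·√(n/(5ε)) for all i ≠ j with i ∈ S and j ∈ S, and M_{ij} = 0 otherwise. Then every real n×n matrix B with ‖M − B‖_F² ≤ ε n satisfies ‖B − I‖_F² > 1.1 · ε n, where I is the n×n identity matrix. In particular, no matrix can simultaneously be an additive-error εn approximation (in squared Frobenius norm) to both M and the identity. -/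
open Matrix

/-- Hard instance for robust PSD LRA: any additive-error εn approximation of the
corrupted block matrix M is far from the identity. -/
theorem robust_lra_distinguisher {n : ℕ} (hn : 1 ≤ n) (ε η : ℝ)
    (hη : 0 < η) (hηε : η ≤ ε / 2)
    (S : Finset (Fin n)) (hS : 5 * ε / η ≤ (S.card : ℝ))
    (M : Matrix (Fin n) (Fin n) ℝ)
    (hM : ∀ i j, M i j =
      if i = j then 1
      else if i ∈ S ∧ j ∈ S then η * Real.sqrt ((n : ℝ) / (5 * ε)) else 0)
    (B : Matrix (Fin n) (Fin n) ℝ)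
    (hB : frobeniusSq (M - B) ≤ ε * n) :
    1.1 * ε * n < frobeniusSq (B - 1) := by
  have hε : 0 < ε := by linarith
  have hn' : (1 : ℝ) ≤ n := by exact_mod_cast hn
  have hc : (η * Real.sqrt ((n : ℝ) / (5 * ε)))^2 = η^2 * (n / (5 * ε)) := by
    rw [mul_pow, Real.sq_sqrt (by positivity)]
  have h1 : frobeniusSq (M - 1) = ((S.card : ℝ) * S.card - S.card) * (η^2 * (n / (5 * ε))) := by
    have e : ∀ i j, ((M - 1) i j)^2
        = if (i, j) ∈ S.offDiag then η^2 * ((n : ℝ) / (5 * ε)) else 0 := by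
      intro i j
      rw [Matrix.sub_apply, hM, Matrix.one_apply]
      by_cases hij : i = j
      · simp [hij]
      · by_cases h : i ∈ S ∧ j ∈ S
        · have : (i, j) ∈ S.offDiag := by simp [h, hij]
          rw [if_neg hij, if_pos h, if_neg hij, if_pos this, sub_zero, hc]
        · have : (i, j) ∉ S.offDiag := by
            simp only [Finset.mem_offDiag]; tauto
          rw [if_neg hij, if_neg h, if_neg hij, if_neg this]; simp
    unfold frobeniusSq
    simp_rw [e]
    rw [← Fintype.sum_prod_type' (f := fun i j =>
      if (i, j) ∈ S.offDiag then η^2 * ((n : ℝ) / (5 * ε)) else 0)]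
    simp only [Prod.mk.eta]
    rw [Finset.sum_ite_mem, Finset.univ_inter, Finset.sum_const, Finset.offDiag_card, nsmul_eq_mul,
      Nat.cast_sub (Nat.le_mul_self _), Nat.cast_mul]
  have h2 : frobeniusSq (M - 1) ≤ 2 * frobeniusSq (M - B) + 2 * frobeniusSq (B - 1) := by
    unfold frobeniusSq
    simp only [Finset.mul_sum, ← Finset.sum_add_distrib]
    refine Finset.sum_le_sum fun i _ => Finset.sum_le_sum fun j _ => ?_
    simp only [Matrix.sub_apply]
    nlinarith [sq_nonneg ((M i j - B i j) - (B i j - (1 : Matrix (Fin n) (Fin n) ℝ) i j))]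
  have h3 : 5 * ε ≤ S.card * η := by rwa [div_le_iff₀ hη] at hS
  have h10 : (10 : ℝ) ≤ S.card := by
    refine le_trans ?_ hS
    rw [le_div_iff₀ hη]; linarith
  have h4 : 4.5 * ε * n ≤ frobeniusSq (M - 1) := by
    rw [h1]
    have a : 0.9 * ((S.card : ℝ) * S.card) ≤ (S.card : ℝ) * S.card - S.card := by nlinarith
    have b : (5 * ε)^2 ≤ (S.card * η)^2 := pow_le_pow_left₀ (by positivity) h3 2
    calc 4.5 * ε * n = 0.9 * (5 * ε)^2 * (n / (5 * ε)) := by field_simp; norm_num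
      _ ≤ 0.9 * (S.card * η)^2 * (n / (5 * ε)) := by gcongr
      _ = 0.9 * ((S.card : ℝ) * S.card) * (η^2 * (n / (5 * ε))) := by ring
      _ ≤ _ := by gcongr
  have : 0 < ε * n := by positivity
  linarith
end

section
/- There is an absolute constant c₀ > 0 with the following property. Let A be an n×n real positive semidefinite matrix and N an n×n real matrix such that ‖N‖_F² ≤ η ‖A‖_F² for some 0 < η ≤ 1 and ‖N_{·,j}‖₂² ≤ ‖A_{·,j}‖₂² for every column index j; assume (A+N)_{jj} > 0 for all j, and set q_j = (A+N)_{jj} / tr(A+N) and φ = max_j A_{jj}/(A+N)_{jj}. Let 0 < ε < 1, 0 < δ < 1, let k ≥ 1 be an integer, and let t be an integer with t ≥ c₀ · φ · √n · k² · log(n/δ) / ε². Sample indices j₁,…,j_t ∈ {1,…,n} independently with ℙ(j_l = j) = q_j, and let T be the n×t matrix whose l-th column is (1/√(t·q_{j_l})) · e_{j_l}, so that A T has columns A_{·,j_l}/√(t·q_{j_l}). Then with probability at least 1 − δ, the matrices (ε/k)‖A‖_F² · I − ((AT)(AT)ᵀ − AAᵀ) and (ε/k)‖A‖_F² · I + ((AT)(AT)ᵀ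 − AAᵀ) are both positive semidefinite; i.e., AAᵀ − (ε/k)‖A‖_F²·I ⪯ (AT)(AT)ᵀ ⪯ AAᵀ + (ε/k)‖A‖_F²·I in the Loewner order. -/
open Matrix

/-- The n×t column-sampling-and-rescaling matrix: its l-th column is
(1/√(t·q(jv l))) times the standard basis vector e_{jv l}. -/
noncomputable def colSample {n : ℕ} (t : ℕ) (q : Fin n → ℝ) (jv : Fin t → Fin n) :
    Matrix (Fin n) (Fin t) ℝ :=
  Matrix.of fun i l => if i = jv l then (Real.sqrt (t * q (jv l)))⁻¹ else 0

/-- Probability, under i.i.d. sampling of t indices with distribution q, of the event E. -/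
noncomputable def iidProb {n : ℕ} (t : ℕ) (q : Fin n → ℝ) (E : Set (Fin t → Fin n)) : ℝ :=
  ∑ jv : Fin t → Fin n, Set.indicator E (fun v => ∏ l, q (v l)) jv

/-- Probability, under two independent i.i.d. samples of t indices each (with
distributions q and p respectively), of the event E. -/
noncomputable def iidProb2 {n : ℕ} (t : ℕ) (q p : Fin n → ℝ)
    (E : Set ((Fin t → Fin n) × (Fin t → Fin n))) : ℝ :=
  ∑ w : (Fin t → Fin n) × (Fin t → Fin n),
    Set.indicator E (fun w => (∏ l, q (w.1 l)) * (∏ l, p (w.2 l))) w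



theorem gt_pow_sub_pow {𝔸 : Type*} [NormedRing 𝔸] [NormOneClass 𝔸] (x y : 𝔸) (K : ℝ) (hK : 1 ≤ K)
    (hx : ‖x‖ ≤ K) (hy : ‖y‖ ≤ K) (m : ℕ) : ‖x ^ m - y ^ m‖ ≤ m * K ^ m * ‖x - y‖ := by
  induction m with
  | zero => simp
  | succ m ih =>
    have h : x ^ (m+1) - y ^ (m+1) = x ^ m * (x - y) + (x ^ m - y ^ m) * y := by
      rw [pow_succ, pow_succ]; noncomm_ring
    have hxm : ‖x ^ m‖ ≤ K ^ m := (norm_pow_le x m).trans (pow_le_pow_left₀ (norm_nonneg _) hx m)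
    have hKm : K ^ m ≤ K ^ (m+1) := pow_le_pow_right₀ hK (Nat.le_succ m)
    have hd := norm_nonneg (x - y)
    have hK0 : 0 ≤ K ^ m := by positivity
    calc ‖x ^ (m+1) - y ^ (m+1)‖ ≤ ‖x ^ m‖ * ‖x - y‖ + ‖x ^ m - y ^ m‖ * ‖y‖ := by
          rw [h]
          exact (norm_add_le _ _).trans (add_le_add (norm_mul_le _ _) (norm_mul_le _ _))
      _ ≤ K ^ (m+1) * ‖x - y‖ + (m * K ^ m * ‖x - y‖) * K := by
          gcongr
          exact hxm.trans hKm
      _ = _ := by push_cast; ring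

open Filter Topology Asymptotics in
theorem gt_limit {𝔸 : Type*} [NormedRing 𝔸] [NormOneClass 𝔸] [NormedAlgebra ℝ 𝔸] (f g : ℝ → 𝔸) (D : 𝔸)
    (hf : HasDerivAt f D 0) (hg : HasDerivAt g D 0) (hf0 : f 0 = 1) (hg0 : g 0 = 1)
    (u : ℕ → ℕ) (hu : Tendsto u atTop atTop) :
    Tendsto (fun m => f ((u m : ℝ)⁻¹) ^ (u m) - g ((u m : ℝ)⁻¹) ^ (u m)) atTop (𝓝 0) := by
  have key : ∀ f : ℝ → 𝔸, HasDerivAt f D 0 → f 0 = 1 → 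
      ∀ᶠ x in 𝓝 (0:ℝ), ‖f x‖ ≤ 1 + (‖D‖ + 1) * |x| := by
    intro f hf hf0
    have := hf.isLittleO
    have := this.def (c := 1) one_pos
    filter_upwards [this] with x hx
    simp only [sub_zero, hf0, one_mul, Real.norm_eq_abs] at hx
    have e : f x = (f x - 1 - x • D) + 1 + x • D := by abel
    calc ‖f x‖ ≤ ‖f x - 1 - x • D‖ + ‖(1:𝔸)‖ + ‖x • D‖ := by
          conv_lhs => rw [e]
          exact norm_add₃_le
      _ ≤ |x| + 1 + |x| * ‖D‖ := by rw [norm_smul, norm_one]; simpa using hx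
      _ = _ := by ring
  have ho : (fun x => f x - g x) =o[𝓝 0] fun x : ℝ => x := by
    have := hf.isLittleO.sub hg.isLittleO
    simp only [sub_zero, hf0, hg0] at this
    refine this.congr_left ?_
    intro x; abel
  have hinv : Tendsto (fun m => ((u m : ℕ) : ℝ)⁻¹) atTop (𝓝 0) :=
    (tendsto_inv_atTop_zero.comp tendsto_natCast_atTop_atTop).comp hu
  have ho' := ho.comp_tendsto hinv
  have h1 := hinv.eventually (key f hf hf0)
  have h2 := hinv.eventually (key g hg hg0)
  have h3 := hu.eventually_gt_atTop 0
  rw [NormedAddGroup.tendsto_nhds_zero]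
  intro ε hε
  set C := ‖D‖ + 1 with hC
  have hCpos : 0 < C := by positivity
  have h4 := ho'.def (c := ε / (2 * Real.exp C)) (by positivity)
  filter_upwards [h1, h2, h3, h4] with m a b c d
  have hm : (0:ℝ) < u m := by exact_mod_cast c
  simp only [Function.comp, Real.norm_eq_abs] at d
  rw [abs_of_pos (by positivity : (0:ℝ) < (u m : ℝ)⁻¹)] at a b d
  have hK : (1 + C * (u m : ℝ)⁻¹) ^ (u m) ≤ Real.exp C := by
    calc _ ≤ (Real.exp (C * (u m : ℝ)⁻¹)) ^ (u m) := by
          apply pow_le_pow_left₀ (by positivity)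
          linarith [Real.add_one_le_exp (C * (u m : ℝ)⁻¹)]
      _ = Real.exp C := by
          rw [← Real.exp_nat_mul]; congr 1; field_simp
  have := gt_pow_sub_pow _ _ (1 + C * (u m : ℝ)⁻¹) (by have : 0 ≤ C * (u m : ℝ)⁻¹ := by positivity
                                                       linarith) a b (u m)
  calc _ ≤ _ := this
    _ ≤ (u m) * Real.exp C * (ε / (2 * Real.exp C) * (u m : ℝ)⁻¹) := by gcongr
    _ = ε / 2 := by field_simp
    _ < ε := by linarith

open Filter Topology in
theorem gt_trotter {𝔸 : Type*} [NormedRing 𝔸] [NormOneClass 𝔸] [NormedAlgebra ℝ 𝔸] [Algebra ℚ 𝔸] [CompleteSpace 𝔸]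
    (A B : 𝔸) (hr : ∀ (X : 𝔸) (m : ℕ),
      NormedSpace.exp ((((2 ^ m : ℕ) : ℝ)⁻¹) • X) ^ (2 ^ m) = NormedSpace.exp X) :
    Tendsto (fun m : ℕ => (NormedSpace.exp (((2 ^ m : ℕ) : ℝ)⁻¹ • A) *
      NormedSpace.exp (((2 ^ m : ℕ) : ℝ)⁻¹ • B)) ^ (2 ^ m)) atTop (𝓝 (NormedSpace.exp (A + B))) := by
  have hd : ∀ X : 𝔸, HasDerivAt (fun u : ℝ => NormedSpace.exp (u • X)) X 0 := by
    intro X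
    simpa using hasDerivAt_exp_smul_const (𝕂 := ℝ) X 0
  have hf : HasDerivAt (fun u : ℝ => NormedSpace.exp (u • A) * NormedSpace.exp (u • B)) (A + B) 0 := by
    have h := (hd A).mul (hd B)
    simp only [zero_smul, NormedSpace.exp_zero, mul_one, one_mul] at h
    exact h
  have hlim := gt_limit _ _ (A + B) hf (hd (A + B)) (by simp) (by simp) (fun m => 2 ^ m)
    (tendsto_pow_atTop_atTop_of_one_lt (by norm_num))
  simp only [hr] at hlim
  simpa using hlim.add_const (NormedSpace.exp (A + B))

section
variable {n : ℕ}

theorem gt_sq_trace (P Q : Matrix (Fin n) (Fin n) ℝ) (hP : P.IsSymm) (hQ : Q.IsSymm) :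
    2 * (P * Q).trace ≤ (P * P).trace + (Q * Q).trace := by
  have h : 0 ≤ ((P - Q) * (P - Q)ᵀ).trace := by
    simp only [trace, diag, mul_apply, transpose_apply]
    exact Finset.sum_nonneg fun i _ => Finset.sum_nonneg fun j _ => mul_self_nonneg _
  rw [transpose_sub, hP.eq, hQ.eq, sub_mul, mul_sub, mul_sub, trace_sub, trace_sub, trace_sub,
    trace_mul_comm Q P] at h
  linarith

theorem gt_tr_ZZ (Z : Matrix (Fin n) (Fin n) ℝ) : (Z * Z).trace ≤ (Z * Zᵀ).trace := by
  have h : 0 ≤ ((Z - Zᵀ) * (Z - Zᵀ)ᵀ).trace := by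
    simp only [trace, diag, mul_apply, transpose_apply]
    exact Finset.sum_nonneg fun i _ => Finset.sum_nonneg fun j _ => mul_self_nonneg _
  have h2 : (Zᵀ * Zᵀ).trace = (Z * Z).trace := by rw [← transpose_mul, trace_transpose]
  rw [transpose_sub, transpose_transpose, sub_mul, mul_sub, mul_sub, trace_sub, trace_sub, trace_sub,
    trace_mul_comm Zᵀ Z, h2] at h
  linarith

theorem gt_cyc (A B : Matrix (Fin n) (Fin n) ℝ) (m : ℕ) :
    ((A * B) ^ m).trace = ((B * A) ^ m).trace := by
  cases m with
  | zero => simp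
  | succ m =>
    have h : (A * B) ^ (m+1) = A * ((B * A) ^ m * B) := by
      have : SemiconjBy A (B * A) (A * B) := by simp [SemiconjBy, mul_assoc]
      have := this.pow_right m
      rw [← mul_assoc, this.eq, pow_succ, mul_assoc]
    rw [h, trace_mul_comm, mul_assoc, ← pow_succ]

theorem gt_LC (j : ℕ) :
    (∀ Z : Matrix (Fin n) (Fin n) ℝ, (Z ^ 2 ^ (j+1)).trace ≤ ((Z * Zᵀ) ^ 2 ^ j).trace) ∧
    (∀ P Q : Matrix (Fin n) (Fin n) ℝ, P.IsSymm → Q.IsSymm →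
      ((P * Q) ^ 2 ^ j).trace ≤ (P ^ 2 ^ j * Q ^ 2 ^ j).trace) := by
  induction j with
  | zero =>
    refine ⟨fun Z => ?_, fun P Q _ _ => by simp⟩
    simpa [pow_two] using gt_tr_ZZ Z
  | succ j ih =>
    obtain ⟨hL, hC⟩ := ih
    refine ⟨fun Z => ?_, fun P Q hP hQ => ?_⟩
    · have hs1 : (Zᵀ * Z).IsSymm := by simp [IsSymm, transpose_mul]
      have hs2 : (Z * Zᵀ).IsSymm := by simp [IsSymm, transpose_mul]
      have e1 : Z ^ 2 ^ (j+1+1) = (Z * Z) ^ 2 ^ (j+1) := by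
        rw [← pow_two, ← pow_mul]; congr 1; ring
      have e2 : ((Z * Z * (Z * Z)ᵀ) ^ 2 ^ j).trace = (((Zᵀ * Z) * (Z * Zᵀ)) ^ 2 ^ j).trace := by
        rw [transpose_mul, show Z * Z * (Zᵀ * Zᵀ) = (Z * Z * Zᵀ) * Zᵀ by simp only [mul_assoc], gt_cyc]
        simp only [mul_assoc]
      have e3 := gt_sq_trace _ _ (hs1.pow (2^j)) (hs2.pow (2^j))
      have e4 : ((Zᵀ * Z) ^ 2 ^ j * (Zᵀ * Z) ^ 2 ^ j).trace = ((Z * Zᵀ) ^ 2 ^ (j+1)).trace := by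
        rw [← pow_add, gt_cyc]; congr 2; ring
      have e5 : ((Z * Zᵀ) ^ 2 ^ j * (Z * Zᵀ) ^ 2 ^ j).trace = ((Z * Zᵀ) ^ 2 ^ (j+1)).trace := by
        rw [← pow_add]; congr 2; ring
      have e6 := hL (Z * Z)
      have e7 := hC _ _ hs1 hs2
      rw [e1]; linarith
    · have e1 := hL (P * Q)
      have e2 : ((P * Q * (P * Q)ᵀ) ^ 2 ^ j).trace = (((P * P) * (Q * Q)) ^ 2 ^ j).trace := by
        rw [transpose_mul, hP.eq, hQ.eq, show P * Q * (Q * P) = (P * Q * Q) * P by simp only [mul_assoc], gt_cyc]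
        simp only [mul_assoc]
      have e3 := hC (P * P) (Q * Q) (by simp [IsSymm, transpose_mul, hP.eq]) (by simp [IsSymm, transpose_mul, hQ.eq])
      rw [← pow_two P, ← pow_two Q, ← pow_mul, ← pow_mul, ← pow_succ', pow_two P, pow_two Q] at e3
      linarith

theorem gt_hr :
   ∀ (X : Matrix (Fin n) (Fin n) ℝ) (m : ℕ),
      NormedSpace.exp ((((2 ^ m : ℕ) : ℝ)⁻¹) • X) ^ (2 ^ m) = NormedSpace.exp X := by
    intro X m
    rw [← Matrix.exp_nsmul]
    congr 1
    rw [← Nat.cast_smul_eq_nsmul ℝ, smul_smul, mul_inv_cancel₀ (by positivity), one_smul]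

attribute [local instance] Matrix.linftyOpNormedRing Matrix.linftyOpNormedAlgebra in
open Filter Topology in
theorem gt_trotter_matrix (hn : 0 < n) (A B : Matrix (Fin n) (Fin n) ℝ) :
    Tendsto (fun m : ℕ => (NormedSpace.exp (((2 ^ m : ℕ) : ℝ)⁻¹ • A) *
      NormedSpace.exp (((2 ^ m : ℕ) : ℝ)⁻¹ • B)) ^ (2 ^ m)) atTop (𝓝 (NormedSpace.exp (A + B))) := by
  have : Nonempty (Fin n) := ⟨⟨0, hn⟩⟩
  have : NormOneClass (Matrix (Fin n) (Fin n) ℝ) := Matrix.linfty_opNormOneClass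
  exact gt_trotter A B gt_hr

open Filter Topology in
theorem golden_thompson (A B : Matrix (Fin n) (Fin n) ℝ) (hA : A.IsSymm) (hB : B.IsSymm) :
    (NormedSpace.exp (A + B)).trace ≤ (NormedSpace.exp A * NormedSpace.exp B).trace := by
  rcases Nat.eq_zero_or_pos n with rfl | hn
  · simp [trace]
  have hs : ∀ (X : Matrix (Fin n) (Fin n) ℝ) (c : ℝ), X.IsSymm → (NormedSpace.exp (c • X)).IsSymm :=
    fun X c hX => (hX.smul c).exp
  have htr : Continuous (fun X : Matrix (Fin n) (Fin n) ℝ => X.trace) := continuous_id.matrix_trace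
  have h2 := (htr.tendsto _).comp (gt_trotter_matrix hn A B)
  refine le_of_tendsto h2 (Eventually.of_forall fun m => ?_)
  have := (gt_LC m).2 _ _ (hs A ((2 ^ m : ℕ) : ℝ)⁻¹ hA) (hs B ((2 ^ m : ℕ) : ℝ)⁻¹ hB)
  rw [gt_hr, gt_hr] at this
  exact this
end

section
variable {n : ℕ}

theorem sp_spec (X : Matrix (Fin n) (Fin n) ℝ) (hX : X.IsSymm) :
    ∃ (U : Matrix (Fin n) (Fin n) ℝ) (d : Fin n → ℝ), Uᵀ * U = 1 ∧ U * Uᵀ = 1 ∧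
      X = U * diagonal d * Uᵀ := by
  have hH : X.IsHermitian := by
    rw [IsHermitian, conjTranspose_eq_transpose_of_trivial]; exact hX
  refine ⟨hH.eigenvectorUnitary, hH.eigenvalues, ?_, ?_, ?_⟩
  · have := Unitary.coe_star_mul_self hH.eigenvectorUnitary
    rwa [star_eq_conjTranspose, conjTranspose_eq_transpose_of_trivial] at this
  · have := Unitary.coe_mul_star_self hH.eigenvectorUnitary
    rwa [Unitary.coe_star, star_eq_conjTranspose, conjTranspose_eq_transpose_of_trivial] at this
  · have := hH.spectral_theorem
    rw [Unitary.conjStarAlgAut_apply, star_eq_conjTranspose, conjTranspose_eq_transpose_of_trivial] at this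
    exact this

theorem sp_exp (U : Matrix (Fin n) (Fin n) ℝ) (d : Fin n → ℝ) (_h1 : Uᵀ * U = 1) (h2 : U * Uᵀ = 1) :
    NormedSpace.exp (U * diagonal d * Uᵀ) = U * diagonal (fun i => Real.exp (d i)) * Uᵀ := by
  have hi : U⁻¹ = Uᵀ := inv_eq_right_inv h2
  have hu : IsUnit U := IsUnit.of_mul_eq_one _ h2
  rw [← hi, Matrix.exp_conj _ _ hu, exp_diagonal]
  congr 3
  ext i
  rw [Pi.coe_exp, Real.exp_eq_exp_ℝ]

theorem sp_psd (U : Matrix (Fin n) (Fin n) ℝ) (d : Fin n → ℝ) (h1 : Uᵀ * U = 1) :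
    (U * diagonal d * Uᵀ).PosSemidef ↔ ∀ i, 0 ≤ d i := by
  rw [← posSemidef_diagonal_iff]
  constructor
  · intro h
    have := h.conjTranspose_mul_mul_same U
    rw [conjTranspose_eq_transpose_of_trivial] at this
    have e : Uᵀ * (U * diagonal d * Uᵀ) * U = (Uᵀ * U) * diagonal d * (Uᵀ * U) := by
      simp only [mul_assoc]
    rwa [e, h1, one_mul, mul_one] at this
  · intro h
    have := h.mul_mul_conjTranspose_same U
    rwa [conjTranspose_eq_transpose_of_trivial] at this

theorem sp_smul_one (U : Matrix (Fin n) (Fin n) ℝ) (c : ℝ) (h2 : U * Uᵀ = 1) :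
    c • (1 : Matrix (Fin n) (Fin n) ℝ) = U * diagonal (fun _ => c) * Uᵀ := by
  rw [← smul_one_eq_diagonal, Matrix.mul_smul, mul_one, Matrix.smul_mul, h2]

theorem sp_sq (U : Matrix (Fin n) (Fin n) ℝ) (d : Fin n → ℝ) (h1 : Uᵀ * U = 1) :
    (U * diagonal d * Uᵀ) * (U * diagonal d * Uᵀ) = U * diagonal (fun i => d i * d i) * Uᵀ := by
  have e : (U * diagonal d * Uᵀ) * (U * diagonal d * Uᵀ)
      = U * (diagonal d * (Uᵀ * U) * diagonal d) * Uᵀ := by simp only [mul_assoc]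
  rw [e, h1, mul_one, diagonal_mul_diagonal]

theorem sp_add (U : Matrix (Fin n) (Fin n) ℝ) (d e : Fin n → ℝ) :
    (U * diagonal d * Uᵀ) + (U * diagonal e * Uᵀ) = U * diagonal (fun i => d i + e i) * Uᵀ := by
  rw [← diagonal_add, mul_add, add_mul]

theorem sp_sub (U : Matrix (Fin n) (Fin n) ℝ) (d e : Fin n → ℝ) :
    (U * diagonal d * Uᵀ) - (U * diagonal e * Uᵀ) = U * diagonal (fun i => d i - e i) * Uᵀ := by
  rw [← diagonal_sub, mul_sub, sub_mul]

theorem sp_smul (U : Matrix (Fin n) (Fin n) ℝ) (d : Fin n → ℝ) (c : ℝ) :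
    c • (U * diagonal d * Uᵀ) = U * diagonal (fun i => c * d i) * Uᵀ := by
  have : diagonal (fun i => c * d i) = c • diagonal d := by
    rw [← diagonal_smul]; rfl
  rw [this, Matrix.mul_smul, Matrix.smul_mul]

theorem sp_scalar (d : ℝ) (hd : d ≤ 1) : Real.exp d ≤ 1 + d + d * d := by
  by_cases h : -1 ≤ d
  · have := Real.abs_exp_sub_one_sub_id_le (abs_le.mpr ⟨h, hd⟩)
    have := (abs_le.mp this).2
    nlinarith
  · push Not at h
    have : Real.exp d ≤ 1 := Real.exp_le_one_iff.mpr (by linarith)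
    nlinarith

theorem sp_exp_le (X : Matrix (Fin n) (Fin n) ℝ) (hX : X.IsSymm) (h : (1 - X).PosSemidef) :
    (1 + X + X * X - NormedSpace.exp X).PosSemidef := by
  obtain ⟨U, d, h1, h2, rfl⟩ := sp_spec X hX
  have e1 := sp_smul_one U 1 h2
  rw [one_smul] at e1
  rw [sp_exp U d h1 h2, sp_sq U d h1, e1, sp_add, sp_add, sp_sub, sp_psd U _ h1]
  rw [e1, sp_sub, sp_psd U _ h1] at h
  intro i
  have := sp_scalar (d i) (by linarith [h i])
  linarith

theorem sp_exp_psd (X : Matrix (Fin n) (Fin n) ℝ) (hX : X.IsSymm) :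
    (NormedSpace.exp X).PosSemidef := by
  obtain ⟨U, d, h1, h2, rfl⟩ := sp_spec X hX
  rw [sp_exp U d h1 h2, sp_psd U _ h1]
  intro i; positivity

theorem sp_trace_exp (X : Matrix (Fin n) (Fin n) ℝ) (hX : X.IsSymm) (s : ℝ)
    (h : ¬ (s • (1 : Matrix (Fin n) (Fin n) ℝ) - X).PosSemidef) :
    Real.exp s ≤ (NormedSpace.exp X).trace := by
  obtain ⟨U, d, h1, h2, rfl⟩ := sp_spec X hX
  rw [sp_smul_one U s h2, sp_sub, sp_psd U _ h1] at h
  push Not at h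
  obtain ⟨i, hi⟩ := h
  rw [sp_exp U d h1 h2, trace_mul_comm, ← mul_assoc, h1, one_mul, trace_diagonal]
  calc Real.exp s ≤ Real.exp (d i) := Real.exp_le_exp.mpr (by linarith)
    _ ≤ _ := Finset.single_le_sum (f := fun i => Real.exp (d i)) (fun j _ => (Real.exp_pos _).le) (Finset.mem_univ i)

theorem sp_AA (A : Matrix (Fin n) (Fin n) ℝ) (hA : A.PosSemidef) (f : ℝ)
    (h : (f • (1 : Matrix (Fin n) (Fin n) ℝ) - A).PosSemidef) : (f • A - A * A).PosSemidef := by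
  have hs : A.IsSymm := by
    have := hA.1; rwa [IsHermitian, conjTranspose_eq_transpose_of_trivial] at this
  obtain ⟨U, d, h1, h2, rfl⟩ := sp_spec A hs
  rw [sp_smul_one U f h2, sp_sub, sp_psd U _ h1] at h
  rw [sp_psd U _ h1] at hA
  rw [sp_smul, sp_sq U d h1, sp_sub, sp_psd U _ h1]
  intro i
  nlinarith [h i, hA i, mul_nonneg (h i) (hA i)]

theorem sp_trace_mul (P Q : Matrix (Fin n) (Fin n) ℝ) (hP : P.PosSemidef) (hQ : Q.PosSemidef) :
    0 ≤ (P * Q).trace := by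
  have hs : P.IsSymm := by
    have := hP.1; rwa [IsHermitian, conjTranspose_eq_transpose_of_trivial] at this
  obtain ⟨U, d, h1, h2, rfl⟩ := sp_spec P hs
  rw [sp_psd U _ h1] at hP
  have h3 := hQ.conjTranspose_mul_mul_same U
  rw [conjTranspose_eq_transpose_of_trivial] at h3
  have e : (U * diagonal d * Uᵀ * Q).trace = (diagonal d * (Uᵀ * Q * U)).trace := by
    rw [mul_assoc, mul_assoc, trace_mul_comm]; simp only [mul_assoc]
  rw [e, trace]
  refine Finset.sum_nonneg fun i _ => ?_
  rw [diag_apply, diagonal_mul]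
  exact mul_nonneg (hP i) (h3.diag_nonneg)

theorem mgf_bound (q : Fin n → ℝ) (hq : ∀ j, 0 ≤ q j) (W : Fin n → Matrix (Fin n) (Fin n) ℝ)
    (hW : ∀ j, (W j).IsSymm) (L : ℝ) (hL : 0 ≤ L)
    (h : (L • (1 : Matrix (Fin n) (Fin n) ℝ) - ∑ j, q j • NormedSpace.exp (W j)).PosSemidef) (t : ℕ) :
    ∑ v : Fin t → Fin n, (∏ l, q (v l)) * (NormedSpace.exp (∑ l, W (v l))).trace ≤ n * L ^ t := by
  have hsum : ∀ (t : ℕ) (v : Fin t → Fin n), (∑ l, W (v l)).IsSymm := by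
    intro t v
    rw [IsSymm, transpose_sum]
    exact Finset.sum_congr rfl fun l _ => hW _
  induction t with
  | zero => simp
  | succ t ih =>
    rw [← (Fin.consEquiv (fun _ : Fin (t+1) => Fin n)).sum_comp, Fintype.sum_prod_type_right]
    simp only [Fin.consEquiv_apply, Fin.prod_univ_succ, Fin.sum_univ_succ, Fin.cons_zero, Fin.cons_succ]
    calc _ ≤ ∑ v : Fin t → Fin n, (∏ l, q (v l)) * (L * (NormedSpace.exp (∑ l, W (v l))).trace) := by
          refine Finset.sum_le_sum fun v _ => ?_
          have hpos : 0 ≤ ∏ l, q (v l) := Finset.prod_nonneg fun l _ => hq _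
          have h1 : ∑ j, q j * (NormedSpace.exp (W j + ∑ l, W (v l))).trace ≤
              L * (NormedSpace.exp (∑ l, W (v l))).trace := by
            have h2 := sp_trace_mul _ _ h (sp_exp_psd _ (hsum t v))
            rw [sub_mul, trace_sub, smul_mul, one_mul, trace_smul, Finset.sum_mul, trace_sum] at h2
            have h3 : ∑ j, q j * (NormedSpace.exp (W j + ∑ l, W (v l))).trace ≤
                ∑ j, (q j • NormedSpace.exp (W j) * NormedSpace.exp (∑ l, W (v l))).trace := by
              refine Finset.sum_le_sum fun j _ => ?_
              rw [smul_mul, trace_smul, smul_eq_mul]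
              exact mul_le_mul_of_nonneg_left (golden_thompson _ _ (hW j) (hsum t v)) (hq j)
            rw [smul_eq_mul] at h2
            linarith
          calc _ = (∏ l, q (v l)) * ∑ j, q j * (NormedSpace.exp (W j + ∑ l, W (v l))).trace := by
                rw [Finset.mul_sum]
                exact Finset.sum_congr rfl fun j _ => by ring
            _ ≤ _ := mul_le_mul_of_nonneg_left h1 hpos
      _ = L * ∑ v : Fin t → Fin n, (∏ l, q (v l)) * (NormedSpace.exp (∑ l, W (v l))).trace := by
          rw [Finset.mul_sum]
          exact Finset.sum_congr rfl fun j _ => by ring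
      _ ≤ L * (n * L ^ t) := mul_le_mul_of_nonneg_left ih hL
      _ = _ := by ring
end

section
variable {n : ℕ}

theorem bern_sum (q : Fin n → ℝ) (hq1 : ∑ j, q j = 1) (Z : Fin n → Matrix (Fin n) (Fin n) ℝ)
    (M : Matrix (Fin n) (Fin n) ℝ) (hM : M = ∑ j, q j • Z j) (b : ℝ) :
    ∑ j, q j • (1 + b • (Z j - M) + (b • (Z j - M)) * (b • (Z j - M)))
      = 1 + (b * b) • ((∑ j, q j • (Z j * Z j)) - M * M) := by
  have h1 : ∀ j, q j • (1 + b • (Z j - M) + (b • (Z j - M)) * (b • (Z j - M)))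
      = q j • (1 - b • M + (b * b) • (M * M)) + b • (q j • Z j)
        + (b * b) • (q j • (Z j * Z j)) - (b * b) • ((q j • Z j) * M) - (b * b) • (M * (q j • Z j)) := by
    intro j
    simp only [Matrix.smul_mul, Matrix.mul_smul, sub_mul, mul_sub]
    module
  simp only [h1, Finset.sum_add_distrib, Finset.sum_sub_distrib, ← Finset.smul_sum, ← Finset.sum_smul,
    ← Finset.sum_mul, ← Finset.mul_sum, ← hM, hq1]
  module

theorem symm_of_psd {X : Matrix (Fin n) (Fin n) ℝ} (h : X.PosSemidef) : X.IsSymm := by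
  have := h.1; rwa [IsHermitian, conjTranspose_eq_transpose_of_trivial] at this

theorem bern_core (q : Fin n → ℝ) (hq : ∀ j, 0 ≤ q j) (hq1 : ∑ j, q j = 1)
    (Z : Fin n → Matrix (Fin n) (Fin n) ℝ) (hZ : ∀ j, (Z j).PosSemidef)
    (M : Matrix (Fin n) (Fin n) ℝ) (hM : M = ∑ j, q j • Z j) (R F : ℝ) (hR : 0 ≤ R) (hF : 0 ≤ F)
    (hZR : ∀ j, (R • (1 : Matrix (Fin n) (Fin n) ℝ) - Z j).PosSemidef)
    (hMF : (F • (1 : Matrix (Fin n) (Fin n) ℝ) - M).PosSemidef)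
    (b : ℝ) (hb : |b| * R ≤ 1) (t : ℕ) :
    ∑ v : Fin t → Fin n, (∏ l, q (v l)) * (NormedSpace.exp (∑ l, b • (Z (v l) - M))).trace
      ≤ n * Real.exp (t * (b * b * R * F)) := by
  have hMp : M.PosSemidef := by
    rw [hM]; exact posSemidef_sum _ fun j _ => (hZ j).smul (hq j)
  have hRM : (R • (1 : Matrix (Fin n) (Fin n) ℝ) - M).PosSemidef := by
    have : R • (1 : Matrix (Fin n) (Fin n) ℝ) - M = ∑ j, q j • (R • (1 : Matrix (Fin n) (Fin n) ℝ) - Z j) := by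
      simp only [smul_sub, Finset.sum_sub_distrib, ← Finset.sum_smul, hq1, one_smul, hM]
    rw [this]
    exact posSemidef_sum _ fun j _ => (hZR j).smul (hq j)
  have hone : (1 : Matrix (Fin n) (Fin n) ℝ).PosSemidef := PosSemidef.one
  have hWs : ∀ j, (b • (Z j - M)).IsSymm := fun j =>
    ((symm_of_psd (hZ j)).sub (symm_of_psd hMp)).smul b
  have hW1 : ∀ j, (1 - b • (Z j - M)).PosSemidef := by
    intro j
    rcases le_total 0 b with h | h
    · rw [abs_of_nonneg h] at hb
      have : 1 - b • (Z j - M) = (1 - b * R) • (1 : Matrix (Fin n) (Fin n) ℝ) + b • (R • (1 : Matrix (Fin n) (Fin n) ℝ) - Z j) + b • M := by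
        module
      rw [this]
      exact ((hone.smul (by linarith)).add ((hZR j).smul h)).add (hMp.smul h)
    · rw [abs_of_nonpos h] at hb
      have : 1 - b • (Z j - M) = (1 - (-b) * R) • (1 : Matrix (Fin n) (Fin n) ℝ) + (-b) • (R • (1 : Matrix (Fin n) (Fin n) ℝ) - M) + (-b) • (Z j) := by
        module
      rw [this]
      exact ((hone.smul (by linarith)).add (hRM.smul (by linarith))).add ((hZ j).smul (by linarith))
  have hMM : (M * M).PosSemidef := by
    have := posSemidef_self_mul_conjTranspose M
    rwa [conjTranspose_eq_transpose_of_trivial, (symm_of_psd hMp).eq] at this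
  have hbb : 0 ≤ b * b := mul_self_nonneg b
  have hL : ((1 + b * b * R * F) • (1 : Matrix (Fin n) (Fin n) ℝ) -
      ∑ j, q j • NormedSpace.exp (b • (Z j - M))).PosSemidef := by
    have e : (1 + b * b * R * F) • (1 : Matrix (Fin n) (Fin n) ℝ) -
        ∑ j, q j • NormedSpace.exp (b • (Z j - M))
        = (b * b) • (R • (F • (1 : Matrix (Fin n) (Fin n) ℝ) - M) +
            ∑ j, q j • (R • Z j - Z j * Z j) + M * M)
          + ∑ j, q j • (1 + b • (Z j - M) + (b • (Z j - M)) * (b • (Z j - M)) -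
              NormedSpace.exp (b • (Z j - M))) := by
      have e1 := bern_sum q hq1 Z M hM b
      have e2 : ∑ j, q j • (R • Z j - Z j * Z j) = R • M - ∑ j, q j • (Z j * Z j) := by
        simp only [smul_sub, Finset.sum_sub_distrib]
        congr 1
        rw [hM, Finset.smul_sum]
        exact Finset.sum_congr rfl fun j _ => smul_comm _ _ _
      have e3 : ∑ j, q j • (1 + b • (Z j - M) + (b • (Z j - M)) * (b • (Z j - M)) -
              NormedSpace.exp (b • (Z j - M))) = ∑ j, q j • (1 + b • (Z j - M) + (b • (Z j - M)) * (b • (Z j - M))) - ∑ j, q j • NormedSpace.exp (b • (Z j - M)) := by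
        rw [← Finset.sum_sub_distrib]
        exact Finset.sum_congr rfl fun j _ => smul_sub _ _ _
      rw [e3, e1, e2]
      module
    rw [e]
    refine PosSemidef.add (PosSemidef.smul (((hMF.smul hR).add ?_).add hMM) hbb) ?_
    · exact posSemidef_sum _ fun j _ => (sp_AA _ (hZ j) R (hZR j)).smul (hq j)
    · exact posSemidef_sum _ fun j _ => (sp_exp_le _ (hWs j) (hW1 j)).smul (hq j)
  have hx : 0 ≤ b * b * R * F := by positivity
  refine (mgf_bound q hq _ hWs _ (by linarith) hL t).trans ?_
  rw [Real.exp_nat_mul]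
  gcongr
  linarith [Real.add_one_le_exp (b * b * R * F)]

theorem bern_tail (q : Fin n → ℝ) (hq : ∀ j, 0 ≤ q j) (hq1 : ∑ j, q j = 1)
    (Z : Fin n → Matrix (Fin n) (Fin n) ℝ) (hZ : ∀ j, (Z j).PosSemidef)
    (M : Matrix (Fin n) (Fin n) ℝ) (hM : M = ∑ j, q j • Z j) (R F s : ℝ) (hR : 0 < R) (hF : 0 < F)
    (hs : 0 < s) (hsF : s ≤ F)
    (hZR : ∀ j, (R • (1 : Matrix (Fin n) (Fin n) ℝ) - Z j).PosSemidef)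
    (hMF : (F • (1 : Matrix (Fin n) (Fin n) ℝ) - M).PosSemidef)
    (t : ℕ) (ht : 0 < t) (E : Set (Fin t → Fin n))
    (hE : ∀ v, v ∉ E → ¬ ((M + s • 1) - (t:ℝ)⁻¹ • ∑ l, Z (v l)).PosSemidef ∨
       ¬ ((t:ℝ)⁻¹ • ∑ l, Z (v l) - (M - s • 1)).PosSemidef) :
    1 - 2 * n * Real.exp (- (t * s ^ 2 / (4 * R * F))) ≤ iidProb t q E := by
  classical
  set a := s / (2 * R * F) with ha
  have ha0 : 0 < a := by positivity
  have haR : a * R ≤ 1 := by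
    rw [ha, div_mul_eq_mul_div, div_le_one (by positivity)]; nlinarith
  have hMp : M.PosSemidef := by
    rw [hM]; exact posSemidef_sum _ fun j _ => (hZ j).smul (hq j)
  have htot : ∑ v : Fin t → Fin n, ∏ l, q (v l) = 1 := by
    rw [← Fintype.sum_pow, hq1, one_pow]
  have c1 := bern_core q hq hq1 Z hZ M hM R F hR.le hF.le hZR hMF a (by rwa [abs_of_pos ha0]) t
  have c2 := bern_core q hq hq1 Z hZ M hM R F hR.le hF.le hZR hMF (-a) (by rwa [abs_neg, abs_of_pos ha0]) t
  have ht' : (0:ℝ) < t := by exact_mod_cast ht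
  set K := Real.exp (a * t * s) with hK
  have hKpos : 0 < K := Real.exp_pos _
  have hWs : ∀ (b : ℝ) (v : Fin t → Fin n), (∑ l, b • (Z (v l) - M)).IsSymm := by
    intro b v
    rw [IsSymm, transpose_sum]
    exact Finset.sum_congr rfl fun l _ => ((symm_of_psd (hZ _)).sub (symm_of_psd hMp)).smul b
  have htrn : ∀ (b : ℝ) (v : Fin t → Fin n), 0 ≤ (NormedSpace.exp (∑ l, b • (Z (v l) - M))).trace :=
    fun b v => (sp_exp_psd _ (hWs b v)).trace_nonneg
  have hWe : ∀ (b : ℝ) (v : Fin t → Fin n), ∑ l, b • (Z (v l) - M) = (b * t) • ((t:ℝ)⁻¹ • ∑ l, Z (v l) - M) := by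
    intro b v
    rw [← Finset.smul_sum, Finset.sum_sub_distrib, smul_sub, smul_sub, smul_smul, mul_assoc,
      mul_inv_cancel₀ ht'.ne', mul_one]
    simp only [Finset.sum_const, Finset.card_univ, Fintype.card_fin]
    rw [← Nat.cast_smul_eq_nsmul ℝ, smul_smul]
  have hpt : ∀ v, (∏ l, q (v l)) ≤ Set.indicator E (fun v => ∏ l, q (v l)) v +
      K⁻¹ * ((∏ l, q (v l)) * (NormedSpace.exp (∑ l, a • (Z (v l) - M))).trace +
        (∏ l, q (v l)) * (NormedSpace.exp (∑ l, (-a) • (Z (v l) - M))).trace) := by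
    intro v
    have hp : 0 ≤ ∏ l, q (v l) := Finset.prod_nonneg fun l _ => hq _
    by_cases hv : v ∈ E
    · rw [Set.indicator_of_mem hv]
      have := htrn a v
      have := htrn (-a) v
      have : 0 ≤ K⁻¹ * ((∏ l, q (v l)) * (NormedSpace.exp (∑ l, a • (Z (v l) - M))).trace +
        (∏ l, q (v l)) * (NormedSpace.exp (∑ l, (-a) • (Z (v l) - M))).trace) := by positivity
      linarith
    · rw [Set.indicator_of_notMem hv, zero_add, ← mul_add, ← mul_assoc, mul_comm K⁻¹, mul_assoc]
      refine le_mul_of_one_le_right hp ?_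
      rw [inv_mul_eq_div, one_le_div hKpos]
      have hat : 0 < a * t := by positivity
      rcases hE v hv with h | h
      · have := sp_trace_exp _ (hWs a v) (a * t * s) (by
          intro hc
          apply h
          rw [hWe] at hc
          have := hc.smul (inv_nonneg.mpr hat.le)
          convert this using 1
          rw [mul_smul (a * t) s, ← smul_sub, smul_smul, inv_mul_cancel₀ hat.ne']
          module)
        linarith [htrn (-a) v]
      · have := sp_trace_exp _ (hWs (-a) v) (a * t * s) (by
          intro hc
          apply h
          rw [hWe] at hc
          have := hc.smul (inv_nonneg.mpr hat.le)
          convert this using 1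
          rw [mul_smul (a * t) s, neg_mul, neg_smul, sub_neg_eq_add, ← smul_add, smul_smul, inv_mul_cancel₀ hat.ne']
          module)
        linarith [htrn a v]
  have hsum := Finset.sum_le_sum fun v (_ : v ∈ Finset.univ) => hpt v
  rw [htot, Finset.sum_add_distrib, ← Finset.mul_sum, Finset.sum_add_distrib] at hsum
  change 1 ≤ iidProb t q E + _ at hsum
  have hfin : K⁻¹ * Real.exp (t * (a * a * R * F)) = Real.exp (- (t * s ^ 2 / (4 * R * F))) := by
    rw [hK, ← Real.exp_neg, ← Real.exp_add]
    congr 1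
    rw [ha]; field_simp; ring
  have h5 : K⁻¹ * (∑ v : Fin t → Fin n, (∏ l, q (v l)) * (NormedSpace.exp (∑ l, a • (Z (v l) - M))).trace +
      ∑ v : Fin t → Fin n, (∏ l, q (v l)) * (NormedSpace.exp (∑ l, (-a) • (Z (v l) - M))).trace)
      ≤ K⁻¹ * (n * Real.exp (t * (a * a * R * F)) + n * Real.exp (t * (a * a * R * F))) := by
    rw [neg_mul_neg] at c2
    gcongr
  rw [← hfin]
  linarith
end

section
variable {n : ℕ}

theorem frob_psd (A : Matrix (Fin n) (Fin n) ℝ) (hA : A.IsSymm) :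
    (Real.sqrt (frobeniusSq A) • (1 : Matrix (Fin n) (Fin n) ℝ) - A).PosSemidef := by
  refine PosSemidef.of_dotProduct_mulVec_nonneg ?_ fun x => ?_
  · rw [IsHermitian, conjTranspose_eq_transpose_of_trivial]
    simp [hA.eq]
  · simp only [sub_mulVec, dotProduct_sub, smul_mulVec, one_mulVec, dotProduct_smul, star_trivial]
    have h1 : (x ⬝ᵥ A *ᵥ x) ^ 2 ≤ (x ⬝ᵥ x) * (frobeniusSq A * (x ⬝ᵥ x)) := by
      have e : ∑ i, (A *ᵥ x) i ^ 2 ≤ frobeniusSq A * (x ⬝ᵥ x) := by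
        rw [frobeniusSq, Finset.sum_mul]
        refine Finset.sum_le_sum fun i _ => ?_
        have := Finset.sum_mul_sq_le_sq_mul_sq Finset.univ (fun j => A i j) x
        simpa [mulVec, dotProduct, pow_two] using this
      have hx : 0 ≤ x ⬝ᵥ x := by
        simp only [dotProduct]; exact Finset.sum_nonneg fun i _ => mul_self_nonneg _
      have := Finset.sum_mul_sq_le_sq_mul_sq Finset.univ x (A *ᵥ x)
      calc (x ⬝ᵥ A *ᵥ x) ^ 2 ≤ (x ⬝ᵥ x) * ∑ i, (A *ᵥ x) i ^ 2 := by
            simpa [dotProduct, pow_two] using this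
        _ ≤ _ := by gcongr
    have hF : 0 ≤ frobeniusSq A := by unfold frobeniusSq; positivity
    have hx : 0 ≤ x ⬝ᵥ x := by
      simp only [dotProduct]; exact Finset.sum_nonneg fun i _ => mul_self_nonneg _
    have hs := Real.sq_sqrt hF
    have h2 : (x ⬝ᵥ A *ᵥ x) ^ 2 ≤ (Real.sqrt (frobeniusSq A) * (x ⬝ᵥ x)) ^ 2 := by
      rw [mul_pow, hs]; nlinarith
    have := abs_le_of_sq_le_sq h2 (by positivity)
    rw [smul_eq_mul]
    linarith [(abs_le.mp this).2]

theorem col_bound (A : Matrix (Fin n) (Fin n) ℝ) (hA : A.PosSemidef) (j : Fin n) :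
    ∑ i, A i j ^ 2 ≤ Real.sqrt (frobeniusSq A) * A j j := by
  have h := (sp_AA A hA _ (frob_psd A (symm_of_psd hA))).diag_nonneg (i := j)
  have e : (A * A) j j = ∑ i, A i j ^ 2 := by
    rw [mul_apply]
    refine Finset.sum_congr rfl fun i _ => ?_
    rw [← (symm_of_psd hA).apply j i, pow_two]
  rw [Matrix.sub_apply, Matrix.smul_apply, e, smul_eq_mul] at h
  linarith

theorem trace_bound (A : Matrix (Fin n) (Fin n) ℝ) :
    A.trace ≤ Real.sqrt n * Real.sqrt (frobeniusSq A) := by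
  rw [← Real.sqrt_mul (by positivity)]
  apply Real.le_sqrt_of_sq_le
  have h := Finset.sum_mul_sq_le_sq_mul_sq Finset.univ (fun _ => (1:ℝ)) (fun j => A j j)
  simp only [one_mul, one_pow, Finset.sum_const, Finset.card_univ, Fintype.card_fin, nsmul_eq_mul, mul_one] at h
  refine h.trans ?_
  gcongr
  unfold frobeniusSq
  exact Finset.sum_le_sum fun i _ => Finset.single_le_sum (f := fun j => A i j ^ 2) (fun j _ => sq_nonneg _) (Finset.mem_univ i)

/-- rank-one sample matrix -/
noncomputable def rk (A : Matrix (Fin n) (Fin n) ℝ) (q : Fin n → ℝ) (j : Fin n) : Matrix (Fin n) (Fin n) ℝ :=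
  (q j)⁻¹ • vecMulVec (fun i => A i j) (fun i => A i j)

theorem rk_psd (A : Matrix (Fin n) (Fin n) ℝ) (q : Fin n → ℝ) (hq : ∀ j, 0 < q j) (j : Fin n) :
    (rk A q j).PosSemidef := by
  have := posSemidef_vecMulVec_self_star (fun i => A i j)
  rw [star_trivial] at this
  exact this.smul (inv_nonneg.mpr (hq j).le)

theorem rk_le (A : Matrix (Fin n) (Fin n) ℝ) (q : Fin n → ℝ) (hq : ∀ j, 0 < q j) (j : Fin n) (R : ℝ)
    (hR : ∑ i, A i j ^ 2 ≤ R * q j) :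
    (R • (1 : Matrix (Fin n) (Fin n) ℝ) - rk A q j).PosSemidef := by
  have hs := symm_of_psd (rk_psd A q hq j)
  refine PosSemidef.of_dotProduct_mulVec_nonneg ?_ fun x => ?_
  · rw [IsHermitian, conjTranspose_eq_transpose_of_trivial]
    simp [hs.eq]
  · have hx : 0 ≤ x ⬝ᵥ x := by
      simp only [dotProduct]; exact Finset.sum_nonneg fun i _ => mul_self_nonneg _
    have e : x ⬝ᵥ (rk A q j *ᵥ x) = (q j)⁻¹ * (∑ i, A i j * x i) ^ 2 := by
      rw [rk, smul_mulVec, dotProduct_smul, smul_eq_mul, vecMulVec_mulVec, dotProduct_smul]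
      simp [dotProduct, pow_two, mul_comm]
    have := Finset.sum_mul_sq_le_sq_mul_sq Finset.univ (fun i => A i j) x
    have e2 : ∑ i, x i ^ 2 = x ⬝ᵥ x := by simp [dotProduct, pow_two]
    rw [e2] at this
    simp only [sub_mulVec, dotProduct_sub, smul_mulVec, one_mulVec, dotProduct_smul, star_trivial]
    rw [e, sub_nonneg, inv_mul_le_iff₀ (hq j), smul_eq_mul]
    nlinarith

theorem rk_mean (A : Matrix (Fin n) (Fin n) ℝ) (q : Fin n → ℝ) (hq : ∀ j, 0 < q j) :
    A * Aᵀ = ∑ j, q j • rk A q j := by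
  ext a b
  rw [mul_apply, Matrix.sum_apply]
  refine Finset.sum_congr rfl fun j _ => ?_
  simp only [rk, Matrix.smul_apply, vecMulVec_apply, transpose_apply, smul_eq_mul]
  rw [mul_inv_cancel_left₀ (hq j).ne']

theorem rk_sample (A : Matrix (Fin n) (Fin n) ℝ) (q : Fin n → ℝ) (hq : ∀ j, 0 < q j) (t : ℕ)
    (v : Fin t → Fin n) :
    (A * colSample t q v) * (A * colSample t q v)ᵀ = (t:ℝ)⁻¹ • ∑ l, rk A q (v l) := by
  have h : ∀ a l, (A * colSample t q v) a l = A a (v l) * (Real.sqrt (t * q (v l)))⁻¹ := by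
    intro a l
    rw [mul_apply]
    simp [colSample]
  ext a b
  rw [mul_apply, Matrix.smul_apply, Matrix.sum_apply, smul_eq_mul, Finset.mul_sum]
  refine Finset.sum_congr rfl fun l _ => ?_
  rw [transpose_apply, h, h]
  simp only [rk, Matrix.smul_apply, vecMulVec_apply, smul_eq_mul]
  have hs : (Real.sqrt (t * q (v l)))⁻¹ * (Real.sqrt (t * q (v l)))⁻¹ = (t:ℝ)⁻¹ * (q (v l))⁻¹ := by
    rw [← mul_inv, Real.mul_self_sqrt (mul_nonneg (by positivity) (hq _).le), mul_inv]
  calc _ = A a (v l) * A b (v l) * ((Real.sqrt (t * q (v l)))⁻¹ * (Real.sqrt (t * q (v l)))⁻¹) := by ring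
    _ = _ := by rw [hs]; ring
end

/-- Robust spectral bound: sampling t ≳ φ√n k² log(n/δ)/ε² columns of a corrupted PSD
matrix proportionally to the diagonal of A+N yields (AT)(AT)ᵀ ≈ AAᵀ up to ±(ε/k)‖A‖_F²·I
in the Loewner order, with probability at least 1−δ. -/
theorem robust_spectral_bound :
    ∃ c₀ : ℝ, 0 < c₀ ∧
      ∀ (n : ℕ) (A N : Matrix (Fin n) (Fin n) ℝ) (η ε δ φ : ℝ) (k t : ℕ),
        A.PosSemidef →
        0 < η → η ≤ 1 →
        frobeniusSq N ≤ η * frobeniusSq A →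
        (∀ j, (∑ i, (N i j)^2) ≤ ∑ i, (A i j)^2) →
        (∀ j, 0 < (A + N) j j) →
        IsGreatest (Set.range fun j => A j j / (A + N) j j) φ →
        0 < ε → ε < 1 → 0 < δ → δ < 1 → 1 ≤ k →
        c₀ * φ * Real.sqrt n * (k : ℝ)^2 * Real.log ((n : ℝ) / δ) / ε^2 ≤ (t : ℝ) →
        1 - δ ≤
          iidProb t (fun j => (A + N) j j / (A + N).trace)
            {v : Fin t → Fin n |
              ((A * Aᵀ + ((ε / k) * frobeniusSq A) • (1 : Matrix (Fin n) (Fin n) ℝ)) -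
                  (A * colSample t (fun j => (A + N) j j / (A + N).trace) v) *
                    (A * colSample t (fun j => (A + N) j j / (A + N).trace) v)ᵀ).PosSemidef ∧
              (((A * colSample t (fun j => (A + N) j j / (A + N).trace) v) *
                    (A * colSample t (fun j => (A + N) j j / (A + N).trace) v)ᵀ) -
                  (A * Aᵀ - ((ε / k) * frobeniusSq A) •
                    (1 : Matrix (Fin n) (Fin n) ℝ))).PosSemidef} := by
  refine ⟨16, by norm_num, ?_⟩
  intro n A N η ε δ φ k t hA hη0 hη1 hN _ hpos hφ hε0 hε1 hδ0 hδ1 hk ht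
  obtain ⟨⟨j0, hj0⟩, hφmax⟩ := hφ
  simp only at hj0
  have hn : 0 < n := j0.pos
  have : Nonempty (Fin n) := ⟨j0⟩
  set T := (A + N).trace with hT
  have hTpos : 0 < T := Finset.sum_pos (fun j _ => hpos j) Finset.univ_nonempty
  set q : Fin n → ℝ := fun j => (A + N) j j / T with hqdef
  have hq : ∀ j, 0 < q j := fun j => div_pos (hpos j) hTpos
  have hq1 : ∑ j, q j = 1 := by
    rw [hqdef, ← Finset.sum_div]; exact div_self hTpos.ne'
  set F := frobeniusSq A with hFdef
  have hF0 : 0 ≤ F := by rw [hFdef]; unfold frobeniusSq; positivity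
  have hT2 : T ≤ 2 * (Real.sqrt n * Real.sqrt F) := by
    have h1 := trace_bound A
    have h2 := trace_bound N
    have h3 : Real.sqrt (frobeniusSq N) ≤ Real.sqrt F := Real.sqrt_le_sqrt (by nlinarith)
    have h4 : Real.sqrt n * Real.sqrt (frobeniusSq N) ≤ Real.sqrt n * Real.sqrt F := by gcongr
    rw [hT, trace_add]
    linarith
  have hF : 0 < F := by
    rcases hF0.lt_or_eq with h | h
    · exact h
    · rw [← h] at hT2; simp at hT2; linarith
  have hsF : Real.sqrt F * Real.sqrt F = F := Real.mul_self_sqrt hF0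
  have hsF0 : 0 < Real.sqrt F := Real.sqrt_pos.mpr hF
  have hAφ : ∀ j, A j j ≤ φ * (A + N) j j := fun j => by
    have := hφmax ⟨j, rfl⟩
    simp only at this
    rwa [div_le_iff₀ (hpos j)] at this
  have hcol : ∀ j, ∑ i, A i j ^ 2 ≤ Real.sqrt F * A j j := col_bound A hA
  have hφ0 : 0 < φ := by
    have h0 : 0 ≤ φ := by rw [← hj0]; exact div_nonneg hA.diag_nonneg (hpos j0).le
    rcases h0.lt_or_eq with h | h
    · exact h
    · exfalso
      have : F ≤ 0 := by
        rw [hFdef, frobeniusSq, Finset.sum_comm]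
        refine Finset.sum_nonpos fun j _ => (hcol j).trans ?_
        have := hAφ j
        rw [← h, zero_mul] at this
        exact mul_nonpos_of_nonneg_of_nonpos hsF0.le this
      linarith
  have hk' : (1:ℝ) ≤ k := by exact_mod_cast hk
  have hn' : (1:ℝ) ≤ n := by exact_mod_cast hn
  have hsn : 0 < Real.sqrt n := Real.sqrt_pos.mpr (by linarith)
  have hlog : 0 < Real.log ((n:ℝ) / δ) := Real.log_pos (by rw [lt_div_iff₀ hδ0]; linarith)
  have ht0 : (0:ℝ) < t := lt_of_lt_of_le (by positivity) ht
  have htn : 0 < t := by exact_mod_cast ht0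
  set s := (ε / k) * F with hs
  have hs0 : 0 < s := by positivity
  have hsle : s ≤ F := by
    have : ε / k ≤ 1 := by rw [div_le_one (by linarith)]; linarith
    rw [hs]; nlinarith
  rcases Nat.lt_or_ge n 2 with hn2 | hn2
  · -- the one-dimensional case is deterministic
    obtain rfl : n = 1 := by omega
    have huniv : ∀ v : Fin t → Fin 1, (A * colSample t q v) * (A * colSample t q v)ᵀ = A * Aᵀ := by
      intro v
      rw [rk_sample A q hq, rk_mean A q hq]
      have hq0 : q 0 = 1 := by simpa using hq1
      have : ∀ l, rk A q (v l) = rk A q 0 := fun l => by rw [Subsingleton.elim (v l) 0]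
      simp only [this, Finset.sum_const, Finset.card_univ, Fintype.card_fin]
      rw [Fin.sum_univ_one, hq0, one_smul]
      rw [← Nat.cast_smul_eq_nsmul ℝ, smul_smul, inv_mul_cancel₀ ht0.ne', one_smul]
    have hsI : (s • (1 : Matrix (Fin 1) (Fin 1) ℝ)).PosSemidef := PosSemidef.one.smul hs0.le
    unfold iidProb
    have hall : ∀ v : Fin t → Fin 1, v ∈ {v : Fin t → Fin 1 |
        ((A * Aᵀ + s • (1 : Matrix (Fin 1) (Fin 1) ℝ)) -
          (A * colSample t q v) * (A * colSample t q v)ᵀ).PosSemidef ∧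
        (((A * colSample t q v) * (A * colSample t q v)ᵀ) -
          (A * Aᵀ - s • (1 : Matrix (Fin 1) (Fin 1) ℝ))).PosSemidef} := by
      intro v
      rw [Set.mem_ofPred_eq, huniv, add_sub_cancel_left, sub_sub_cancel]
      exact ⟨hsI, hsI⟩
    rw [Finset.sum_congr rfl fun v _ => Set.indicator_of_mem (hall v) _, ← Fintype.sum_pow, hq1, one_pow]
    linarith
  · set R := 2 * φ * Real.sqrt n * F with hR
    have hR0 : 0 < R := by positivity
    have hZR : ∀ j, (R • (1 : Matrix (Fin n) (Fin n) ℝ) - rk A q j).PosSemidef := by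
      intro j
      refine rk_le A q hq j R ((hcol j).trans ?_)
      rw [hqdef]
      simp only
      rw [← mul_div_assoc, le_div_iff₀ hTpos]
      have hp := hpos j
      calc Real.sqrt F * A j j * T ≤ Real.sqrt F * (φ * (A + N) j j) * (2 * (Real.sqrt n * Real.sqrt F)) := by
            apply mul_le_mul _ hT2 hTpos.le (by positivity)
            exact mul_le_mul_of_nonneg_left (hAφ j) hsF0.le
        _ = 2 * φ * Real.sqrt n * (Real.sqrt F * Real.sqrt F) * (A + N) j j := by ring
        _ = R * (A + N) j j := by rw [hsF]
    have hMF : (F • (1 : Matrix (Fin n) (Fin n) ℝ) - A * Aᵀ).PosSemidef := by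
      have h1 := frob_psd A (symm_of_psd hA)
      have h2 := sp_AA A hA _ h1
      rw [← hFdef] at h1 h2
      have e : F • (1 : Matrix (Fin n) (Fin n) ℝ) - A * Aᵀ =
          Real.sqrt F • (Real.sqrt F • (1 : Matrix (Fin n) (Fin n) ℝ) - A) + (Real.sqrt F • A - A * A) := by
        rw [(symm_of_psd hA).eq, smul_sub, smul_smul, hsF]; abel
      rw [e]
      exact (h1.smul hsF0.le).add h2
    refine le_trans ?_ (bern_tail q (fun j => (hq j).le) hq1 (rk A q) (rk_psd A q hq) (A * Aᵀ)
      (rk_mean A q hq) R F s hR0 hF hs0 hsle hZR hMF t htn _ ?_)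
    · have hn2' : (2:ℝ) ≤ n := by exact_mod_cast hn2
      have h1 : 2 * Real.log ((n:ℝ) / δ) ≤ t * s ^ 2 / (4 * R * F) := by
        have e : t * s ^ 2 / (4 * R * F) = t * (ε ^ 2 / (8 * φ * Real.sqrt n * k ^ 2)) := by
          rw [hs, hR]; field_simp; ring
        have e2 : 2 * Real.log ((n:ℝ) / δ) =
            (16 * φ * Real.sqrt n * (k : ℝ)^2 * Real.log ((n : ℝ) / δ) / ε^2) *
              (ε ^ 2 / (8 * φ * Real.sqrt n * k ^ 2)) := by
          field_simp; norm_num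
        rw [e, e2]
        exact mul_le_mul_of_nonneg_right ht (by positivity)
      have h2 : Real.exp (-(t * s ^ 2 / (4 * R * F))) ≤ (δ / n) ^ 2 := by
        calc _ ≤ Real.exp (-(2 * Real.log ((n:ℝ) / δ))) := Real.exp_le_exp.mpr (by linarith)
          _ = (δ / n) ^ 2 := by
            rw [← mul_neg, ← Real.log_inv, inv_div, mul_comm, Real.exp_mul,
              Real.exp_log (by positivity)]
            norm_num
      have h3 : 2 * n * (δ / n) ^ 2 ≤ δ := by
        have : 2 * n * (δ / n) ^ 2 = 2 * δ ^ 2 / n := by field_simp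
        rw [this, div_le_iff₀ (by linarith)]
        nlinarith
      have h4 : 2 * (n:ℝ) * Real.exp (-(t * s ^ 2 / (4 * R * F))) ≤ 2 * n * (δ / n) ^ 2 := by gcongr
      linarith
    · intro v hv
      rw [Set.mem_ofPred_eq, rk_sample A q hq] at hv
      exact not_and_or.mp hv
end

section
/- There is an absolute constant c₀ > 0 with the following property. Let A be an n×n real positive semidefinite matrix and N an n×n real matrix such that ‖N‖_F² ≤ η ‖A‖_F² for some 0 < η ≤ 1 and ‖N_{·,j}‖₂² ≤ ‖A_{·,j}‖₂² for every j; assume (A+N)_{jj} > 0 for all j, and set p_j = q_j = (A+N)_{jj}/tr(A+N) and φ = max_j A_{jj}/(A+N)_{jj}. Let 0 < ε < 1, 0 < δ < 1, let k ≥ 1 be an integer, and let t be an integer with t ≥ c₀ · φ · √n · k² · log(n/δ) / ε². Sample indices j₁,…,j_t independently with ℙ(j_l = j) = q_j and, independently, indices i₁,…,i_t independently with ℙ(i_l = i) = p_i. Let T be the n×t matrix with l-th column (1/√(t·q_{j_l}))·e_{j_l} and let S be the t×n matrix with l-th row (1/√(t·p_{i_l}))·e_{i_l}ᵀ. Then with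 probability at least 1 − δ over both samplings, (AT)ᵀ(AT) − (ε/k)‖A‖_F²·I ⪯ (S A T)ᵀ(S A T) ⪯ (AT)ᵀ(AT) + (ε/k)‖A‖_F²·I in the Loewner order. -/
open Matrix

/-- X − c·I ⪯ Y ⪯ X + c·I in the Loewner order. -/
def loewnerBand {d : ℕ} (X Y : Matrix (Fin d) (Fin d) ℝ) (c : ℝ) : Prop :=
  ((X + c • (1 : Matrix (Fin d) (Fin d) ℝ)) - Y).PosSemidef ∧
  (Y - (X - c • (1 : Matrix (Fin d) (Fin d) ℝ))).PosSemidef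

lemma cosh_sqrt_convex (u v a b : ℝ) (ha : 0 ≤ a) (hb : 0 ≤ b) (hu : 0 ≤ u) (hv : 0 ≤ v)
    (huv : u + v = 1) :
    Real.cosh (Real.sqrt (u * a + v * b)) ≤
      u * Real.cosh (Real.sqrt a) + v * Real.cosh (Real.sqrt b) := by
  have key : ∀ s : ℝ, 0 ≤ s → HasSum (fun k : ℕ => s ^ k / ((2 * k).factorial : ℝ))
      (Real.cosh (Real.sqrt s)) := by
    intro s hs
    have h := Real.hasSum_cosh (Real.sqrt s)
    simpa [pow_mul, Real.sq_sqrt hs] using h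
  have h1 := key (u * a + v * b) (by positivity)
  have h2 := ((key a ha).mul_left u).add ((key b hb).mul_left v)
  refine hasSum_le (fun k => ?_) h1 h2
  have hc := (convexOn_pow k).2 (Set.mem_Ici.2 ha) (Set.mem_Ici.2 hb) hu hv huv
  simp only [smul_eq_mul] at hc
  have hf : (0 : ℝ) < ((2 * k).factorial : ℝ) := by positivity
  calc _ ≤ (u * a ^ k + v * b ^ k) / ((2 * k).factorial : ℝ) := by gcongr
    _ = _ := by ring

lemma cosh_scalar_step (x y : ℝ) (hx : 0 ≤ x) (hy : 0 ≤ y) :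
    Real.cosh (x + y) ≤ Real.cosh x + Real.sinh x * y + (Real.exp y - 1 - y) * Real.cosh x ∧
    Real.cosh (x - y) ≤ Real.cosh x - Real.sinh x * y + (Real.exp y - 1 - y) * Real.cosh x := by
  have h1 : 0 ≤ Real.sinh x := Real.sinh_nonneg_iff.2 hx
  have h2 : Real.sinh x ≤ Real.cosh x := (Real.sinh_lt_cosh x).le
  have h3 : y ≤ Real.sinh y := Real.self_le_sinh_iff.2 hy
  have h4 : Real.exp y = Real.cosh y + Real.sinh y := (Real.cosh_add_sinh y).symm
  rw [Real.cosh_add, Real.cosh_sub, h4]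
  constructor
  · nlinarith [mul_nonneg (sub_nonneg.2 h2) (sub_nonneg.2 h3)]
  · nlinarith [mul_nonneg (sub_nonneg.2 h2) (sub_nonneg.2 h3), mul_nonneg h1 (sub_nonneg.2 h3)]

/-- one-step inequality -/
lemma cosh_norm_step {E : Type*} [NormedAddCommGroup E] [InnerProductSpace ℝ E] (x y : E) :
    Real.cosh ‖x + y‖ ≤ Real.cosh ‖x‖ + (Real.sinh ‖x‖ / ‖x‖) * inner ℝ x y
      + (Real.exp ‖y‖ - 1 - ‖y‖) * Real.cosh ‖x‖ := by
  rcases eq_or_ne x 0 with rfl | hx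
  · have := (cosh_scalar_step 0 ‖y‖ le_rfl (norm_nonneg y)).1
    simpa using this
  rcases eq_or_ne y 0 with rfl | hy
  · simp
  have hx0 : 0 < ‖x‖ := norm_pos_iff.2 hx
  have hy0 : 0 < ‖y‖ := norm_pos_iff.2 hy
  have hc := abs_le.1 (abs_real_inner_le_norm x y)
  set c : ℝ := inner ℝ x y with hcdef
  set a := ‖x‖
  set b := ‖y‖
  have hab : 0 < a * b := mul_pos hx0 hy0
  obtain ⟨s1, s2⟩ := cosh_scalar_step a b hx0.le hy0.le
  have hu : 0 ≤ (a * b + c) / (2 * (a * b)) := div_nonneg (by linarith [hc.1]) (by positivity)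
  have hv : 0 ≤ (a * b - c) / (2 * (a * b)) := div_nonneg (by linarith [hc.2]) (by positivity)
  have huv : (a * b + c) / (2 * (a * b)) + (a * b - c) / (2 * (a * b)) = 1 := by
    field_simp; ring
  have hconv := cosh_sqrt_convex _ _ ((a + b) ^ 2) ((a - b) ^ 2) (sq_nonneg _) (sq_nonneg _) hu hv huv
  have hn : (a * b + c) / (2 * (a * b)) * (a + b) ^ 2 + (a * b - c) / (2 * (a * b)) * (a - b) ^ 2
      = ‖x + y‖ ^ 2 := by
    rw [norm_add_sq_real]
    change _ = a ^ 2 + 2 * c + b ^ 2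
    field_simp; ring
  rw [hn, Real.sqrt_sq (norm_nonneg _), Real.sqrt_sq_eq_abs, Real.sqrt_sq_eq_abs, Real.cosh_abs,
    Real.cosh_abs] at hconv
  refine hconv.trans ?_
  have m1 := mul_le_mul_of_nonneg_left s1 hu
  have m2 := mul_le_mul_of_nonneg_left s2 hv
  refine (add_le_add m1 m2).trans (le_of_eq ?_)
  field_simp; ring

lemma sum_fin_succ_fun {α : Type*} [Fintype α] [DecidableEq α] (s : ℕ) (f : (Fin (s + 1) → α) → ℝ) :
    ∑ w, f w = ∑ j, ∑ w : Fin s → α, f (Fin.cons j w) := by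
  rw [← Fintype.sum_prod_type']
  exact (Fintype.sum_equiv (Fin.consEquiv (fun _ => α)) _ _ (fun p => rfl)).symm

lemma pinelis {n : ℕ} {E : Type*} [NormedAddCommGroup E] [InnerProductSpace ℝ E]
    (q : Fin n → ℝ) (hq : ∀ j, 0 ≤ q j) (hq1 : ∑ j, q j = 1) (Y : Fin n → E)
    (hY0 : ∑ j, q j • Y j = 0) (hY1 : ∀ j, ‖Y j‖ ≤ 1) (v : ℝ) (hv : ∑ j, q j * ‖Y j‖ ^ 2 ≤ v)
    (s : ℕ) : ∀ x : E, ∑ w : Fin s → Fin n, (∏ l, q (w l)) * Real.cosh ‖x + ∑ l, Y (w l)‖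
      ≤ (1 + v) ^ s * Real.cosh ‖x‖ := by
  have hv0 : 0 ≤ v := le_trans (Finset.sum_nonneg fun j _ => by have := hq j; positivity) hv
  induction s with
  | zero => intro x; simp
  | succ s ih =>
    intro x
    rw [sum_fin_succ_fun]
    have h1 : ∀ j, ∑ w : Fin s → Fin n, (∏ l, q ((Fin.cons j w : Fin (s+1) → Fin n) l)) *
        Real.cosh ‖x + ∑ l, Y ((Fin.cons j w : Fin (s+1) → Fin n) l)‖ ≤
        q j * ((1 + v) ^ s * Real.cosh ‖x + Y j‖) := by
      intro j
      refine le_trans (le_of_eq ?_) (mul_le_mul_of_nonneg_left (ih (x + Y j)) (hq j))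
      rw [Finset.mul_sum]
      refine Finset.sum_congr rfl fun w _ => ?_
      rw [Fin.prod_univ_succ, Fin.sum_univ_succ]
      simp [add_assoc, mul_assoc]
    refine (Finset.sum_le_sum fun j _ => h1 j).trans ?_
    have h2 : ∑ j, q j * Real.cosh ‖x + Y j‖ ≤ (1 + v) * Real.cosh ‖x‖ := by
      have hj : ∀ j, q j * Real.cosh ‖x + Y j‖ ≤ q j * Real.cosh ‖x‖
          + (Real.sinh ‖x‖ / ‖x‖) * inner ℝ x (q j • Y j)
          + (q j * ‖Y j‖ ^ 2) * Real.cosh ‖x‖ := by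
        intro j
        have e1 := cosh_norm_step x (Y j)
        have e2 : Real.exp ‖Y j‖ - 1 - ‖Y j‖ ≤ ‖Y j‖ ^ 2 := by
          have := Real.abs_exp_sub_one_sub_id_le (x := ‖Y j‖) (by simpa using hY1 j)
          exact (le_abs_self _).trans this
        have e3 := mul_le_mul_of_nonneg_right e2 (Real.cosh_pos ‖x‖).le
        have e4 := mul_le_mul_of_nonneg_left (e1.trans (add_le_add_right e3 _)) (hq j)
        rw [inner_smul_right]
        linarith
      refine (Finset.sum_le_sum fun j _ => hj j).trans ?_
      rw [Finset.sum_add_distrib, Finset.sum_add_distrib, ← Finset.sum_mul, ← Finset.sum_mul,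
        ← Finset.mul_sum, ← inner_sum, hY0, hq1, inner_zero_right]
      have := mul_le_mul_of_nonneg_right hv (Real.cosh_pos ‖x‖).le
      linarith
    calc _ = (1 + v) ^ s * ∑ j, q j * Real.cosh ‖x + Y j‖ := by
          rw [Finset.mul_sum]; exact Finset.sum_congr rfl fun j _ => by ring
      _ ≤ (1 + v) ^ s * ((1 + v) * Real.cosh ‖x‖) := by gcongr
      _ = _ := by ring

lemma chernoff {n : ℕ} (q : Fin n → ℝ) (hq : ∀ j, 0 ≤ q j) (hq1 : ∑ j, q j = 1) (W : Fin n → ℝ)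
    (hW0 : ∀ j, 0 ≤ W j) (hW1 : ∀ j, W j ≤ 1) (m : ℝ) (hm : ∑ j, q j * W j ≤ m) (s : ℕ) :
    ∑ w : Fin s → Fin n, (∏ l, q (w l)) * Real.exp (∑ l, W (w l)) ≤ Real.exp (2 * (s * m)) := by
  have h1 : ∑ w : Fin s → Fin n, (∏ l, q (w l)) * Real.exp (∑ l, W (w l))
      = (∑ j, q j * Real.exp (W j)) ^ s := by
    rw [Fintype.sum_pow]
    refine Finset.sum_congr rfl fun w _ => ?_
    rw [Real.exp_sum, Finset.prod_mul_distrib]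
  have h2 : ∑ j, q j * Real.exp (W j) ≤ Real.exp (2 * m) := by
    have : ∀ j, q j * Real.exp (W j) ≤ q j + 2 * (q j * W j) := by
      intro j
      have := Real.abs_exp_sub_one_sub_id_le (x := W j) (by rw [abs_of_nonneg (hW0 j)]; exact hW1 j)
      have := (le_abs_self _).trans this
      have e : Real.exp (W j) ≤ 1 + 2 * W j := by nlinarith [hW0 j, hW1 j]
      nlinarith [mul_le_mul_of_nonneg_left e (hq j)]
    refine (Finset.sum_le_sum fun j _ => this j).trans ?_
    rw [Finset.sum_add_distrib, ← Finset.mul_sum, hq1]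
    linarith [Real.add_one_le_exp (2 * m)]
  rw [h1]
  calc _ ≤ (Real.exp (2 * m)) ^ s := by
        gcongr
        exact Finset.sum_nonneg fun j _ => mul_nonneg (hq j) (Real.exp_pos _).le
    _ = _ := by rw [← Real.exp_nat_mul]; ring_nf

open scoped MatrixOrder Matrix.Norms.L2Operator in
lemma psd_cs {n : ℕ} (A : Matrix (Fin n) (Fin n) ℝ) (hA : A.PosSemidef) (u v : Fin n → ℝ) :
    (u ⬝ᵥ A *ᵥ v) ^ 2 ≤ (u ⬝ᵥ A *ᵥ u) * (v ⬝ᵥ A *ᵥ v) := by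
  obtain ⟨B, hB⟩ := CStarAlgebra.nonneg_iff_eq_star_mul_self.mp hA.nonneg
  rw [Matrix.star_eq_conjTranspose] at hB
  subst hB
  have h : ∀ u v : Fin n → ℝ, u ⬝ᵥ (Bᴴ * B) *ᵥ v = ∑ i, (B *ᵥ u) i * (B *ᵥ v) i := by
    intro u v
    rw [← Matrix.mulVec_mulVec, Matrix.dotProduct_mulVec, Matrix.conjTranspose_eq_transpose_of_trivial, Matrix.vecMul_transpose]
    rfl
  rw [h, h, h]
  have := Finset.sum_mul_sq_le_sq_mul_sq Finset.univ (B *ᵥ u) (B *ᵥ v)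
  simpa [sq] using this

lemma quad_le {m : ℕ} (D : Matrix (Fin m) (Fin m) ℝ) (r : ℝ) (hr : 0 ≤ r)
    (hD : frobeniusSq D ≤ r ^ 2) (u : Fin m → ℝ) :
    |u ⬝ᵥ D *ᵥ u| ≤ r * ∑ i, u i ^ 2 := by
  have h0 : 0 ≤ ∑ i, u i ^ 2 := Finset.sum_nonneg fun i _ => sq_nonneg _
  refine abs_le_of_sq_le_sq ?_ (mul_nonneg hr h0)
  have h1 : u ⬝ᵥ D *ᵥ u = ∑ p : Fin m × Fin m, D p.1 p.2 * (u p.1 * u p.2) := by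
    rw [Fintype.sum_prod_type]
    simp only [dotProduct, Matrix.mulVec, Finset.mul_sum]
    exact Finset.sum_congr rfl fun i _ => Finset.sum_congr rfl fun j _ => by ring
  have h2 := Finset.sum_mul_sq_le_sq_mul_sq Finset.univ (fun p : Fin m × Fin m => D p.1 p.2)
    (fun p => u p.1 * u p.2)
  have h3 : ∑ p : Fin m × Fin m, (u p.1 * u p.2) ^ 2 = (∑ i, u i ^ 2) ^ 2 := by
    rw [Fintype.sum_prod_type, sq, Finset.sum_mul_sum]
    exact Finset.sum_congr rfl fun i _ => Finset.sum_congr rfl fun j _ => by ring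
  have h4 : ∑ p : Fin m × Fin m, (D p.1 p.2) ^ 2 = frobeniusSq D := by
    rw [Fintype.sum_prod_type]; rfl
  rw [h1]
  refine h2.trans ?_
  rw [h3, h4, mul_pow]
  gcongr

lemma diag_bound {n : ℕ} (A : Matrix (Fin n) (Fin n) ℝ) (hA : A.PosSemidef) (i j : Fin n) :
    A i j ^ 2 ≤ A i i * A j j := by
  simpa using psd_cs A hA (Pi.single i 1) (Pi.single j 1)

lemma row_bound {n : ℕ} (A : Matrix (Fin n) (Fin n) ℝ) (hA : A.PosSemidef) (i : Fin n) :
    ∑ j, A i j ^ 2 ≤ Real.sqrt (frobeniusSq A) * A i i := by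
  have hF : 0 ≤ frobeniusSq A :=
    Finset.sum_nonneg fun i _ => Finset.sum_nonneg fun j _ => sq_nonneg _
  have hsym : ∀ a b, A a b = A b a := fun a b => by
    have := congrFun (congrFun hA.1 b) a
    simpa using this
  have h1 := psd_cs A hA (fun j => A i j) (Pi.single i 1)
  have h2 := (abs_le.1 (quad_le A (Real.sqrt (frobeniusSq A)) (Real.sqrt_nonneg _)
    (Real.sq_sqrt hF).ge (fun j => A i j))).2
  have h3 : (fun j => A i j) ⬝ᵥ A *ᵥ (Pi.single i 1) = ∑ j, A i j ^ 2 := by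
    simp [dotProduct, sq, hsym _ i]
  have h4 : (Pi.single i 1 : Fin n → ℝ) ⬝ᵥ A *ᵥ (Pi.single i 1) = A i i := by simp
  rw [h3, h4] at h1
  have h5 : 0 ≤ A i i := hA.diag_nonneg
  set s := ∑ j, A i j ^ 2
  have hs : 0 ≤ s := Finset.sum_nonneg fun j _ => sq_nonneg _
  have h6 : s ^ 2 ≤ Real.sqrt (frobeniusSq A) * s * A i i :=
    h1.trans (mul_le_mul_of_nonneg_right h2 h5)
  rcases hs.eq_or_lt with h | h
  · rw [← h]; positivity
  · nlinarith

noncomputable def Zvec {n t : ℕ} (q : Fin n → ℝ) (M : Matrix (Fin n) (Fin t) ℝ) (i : Fin n) :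
    EuclideanSpace ℝ (Fin t × Fin t) :=
  WithLp.toLp 2 fun p => M i p.1 * M i p.2 / q i

noncomputable def Yvec {n t : ℕ} (q : Fin n → ℝ) (M : Matrix (Fin n) (Fin t) ℝ) (i : Fin n) :
    EuclideanSpace ℝ (Fin t × Fin t) :=
  (t : ℝ)⁻¹ • (Zvec q M i - ∑ k, q k • Zvec q M k)

lemma Zvec_norm {n t : ℕ} (q : Fin n → ℝ) (hq : ∀ j, 0 < q j) (M : Matrix (Fin n) (Fin t) ℝ)
    (i : Fin n) : ‖Zvec q M i‖ = (∑ a, M i a ^ 2) / q i := by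
  have h0 : 0 ≤ (∑ a, M i a ^ 2) / q i :=
    div_nonneg (Finset.sum_nonneg fun i _ => sq_nonneg _) (hq i).le
  rw [← sq_eq_sq₀ (norm_nonneg _) h0, EuclideanSpace.norm_sq_eq, Fintype.sum_prod_type, div_pow,
    sq (∑ a, M i a ^ 2), Finset.sum_mul_sum, Finset.sum_div]
  refine Finset.sum_congr rfl fun a _ => ?_
  rw [Finset.sum_div]
  refine Finset.sum_congr rfl fun b _ => ?_
  simp only [Zvec, Real.norm_eq_abs, sq_abs]
  ring

lemma row_tail {n t : ℕ} (ht : 0 < t) (q : Fin n → ℝ) (hq : ∀ j, 0 < q j) (hq1 : ∑ j, q j = 1)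
    (M : Matrix (Fin n) (Fin t) ℝ) (L F lam : ℝ) (hlam : 0 ≤ lam)
    (hL : ∀ i, (∑ a, M i a ^ 2) / q i ≤ L) (hF : ∑ i, ∑ a, M i a ^ 2 ≤ F) (hLt : lam * (2 * L) ≤ t) :
    ∑ w : Fin t → Fin n, (∏ l, q (w l)) * Real.cosh (lam * ‖∑ l, Yvec q M (w l)‖)
      ≤ Real.exp (lam ^ 2 * L * F / t) := by
  have ht' : (0 : ℝ) < t := by exact_mod_cast ht
  set G := ∑ k, q k • Zvec q M k with hG
  have hn0 : 0 < n := by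
    rcases Nat.eq_zero_or_pos n with rfl | h
    · simp at hq1
    · exact h
  have hZ : ∀ i, ‖Zvec q M i‖ ≤ L := fun i => by rw [Zvec_norm q hq]; exact hL i
  have hL0 : 0 ≤ L := (norm_nonneg _).trans (hZ ⟨0, hn0⟩)
  have hGn : ‖G‖ ≤ L := by
    refine (norm_sum_le _ _).trans ?_
    calc _ ≤ ∑ k, q k * L := Finset.sum_le_sum fun k _ => by
            rw [norm_smul, Real.norm_of_nonneg (hq k).le]
            exact mul_le_mul_of_nonneg_left (hZ k) (hq k).le
      _ = L := by rw [← Finset.sum_mul, hq1, one_mul]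
  have hvar : ∑ j, q j * ‖Zvec q M j - G‖ ^ 2 ≤ L * F := by
    have e : ∀ j, q j * ‖Zvec q M j - G‖ ^ 2 = q j * ‖Zvec q M j‖ ^ 2
        - 2 * inner ℝ (q j • Zvec q M j) G + q j * ‖G‖ ^ 2 := by
      intro j
      rw [norm_sub_sq_real, real_inner_smul_left]; ring
    have e2 : ∀ j, q j * ‖Zvec q M j‖ ^ 2 ≤ L * ∑ a, M j a ^ 2 := by
      intro j
      have h1 : q j * ‖Zvec q M j‖ = ∑ a, M j a ^ 2 := by
        rw [Zvec_norm q hq]; field_simp [(hq j).ne']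
      calc _ = (q j * ‖Zvec q M j‖) * ‖Zvec q M j‖ := by ring
        _ ≤ (q j * ‖Zvec q M j‖) * L :=
            mul_le_mul_of_nonneg_left (hZ j) (mul_nonneg (hq j).le (norm_nonneg _))
        _ = _ := by rw [h1]; ring
    simp_rw [e]
    rw [Finset.sum_add_distrib, Finset.sum_sub_distrib, ← Finset.mul_sum, ← sum_inner, ← hG,
      ← Finset.sum_mul, hq1, real_inner_self_eq_norm_sq]
    have h3 := Finset.sum_le_sum fun j (_ : j ∈ Finset.univ) => e2 j
    rw [← Finset.mul_sum] at h3
    have h4 := mul_le_mul_of_nonneg_left hF hL0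
    nlinarith [sq_nonneg ‖G‖]
  have hYn : ∀ j, ‖lam • Yvec q M j‖ = lam / t * ‖Zvec q M j - G‖ := by
    intro j
    rw [norm_smul, Yvec, norm_smul, Real.norm_of_nonneg hlam, Real.norm_of_nonneg (by positivity)]
    ring
  have hp := pinelis q (fun j => (hq j).le) hq1 (fun j => lam • Yvec q M j) (by
      have : ∀ j, q j • lam • Yvec q M j = (lam * (t : ℝ)⁻¹) • (q j • Zvec q M j - q j • G) := by
        intro j
        rw [Yvec, ← smul_sub, smul_smul, smul_smul, smul_smul]
        congr 1; ring
      simp_rw [this]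
      rw [← Finset.smul_sum, Finset.sum_sub_distrib, ← Finset.sum_smul, hq1, one_smul, ← hG, sub_self,
        smul_zero])
    (by
      intro j
      rw [hYn]
      have : ‖Zvec q M j - G‖ ≤ 2 * L := (norm_sub_le _ _).trans (by linarith [hZ j])
      calc _ ≤ lam / t * (2 * L) := by gcongr
        _ = lam * (2 * L) / t := by ring
        _ ≤ 1 := (div_le_one ht').2 hLt)
    (lam ^ 2 * L * F / t ^ 2) (by
      simp_rw [hYn]
      calc _ = (lam / t) ^ 2 * ∑ j, q j * ‖Zvec q M j - G‖ ^ 2 := by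
            rw [Finset.mul_sum]; exact Finset.sum_congr rfl fun j _ => by ring
        _ ≤ (lam / t) ^ 2 * (L * F) := by gcongr
        _ = _ := by ring) t 0
  have hF0 : 0 ≤ F := le_trans (Finset.sum_nonneg fun i _ => Finset.sum_nonneg fun j _ => sq_nonneg _) hF
  simp only [zero_add, norm_zero, Real.cosh_zero, mul_one, ← Finset.smul_sum, norm_smul,
    Real.norm_of_nonneg hlam] at hp
  refine hp.trans ?_
  have := Real.add_one_le_exp (lam ^ 2 * L * F / t ^ 2)
  calc _ ≤ (Real.exp (lam ^ 2 * L * F / t ^ 2)) ^ t := by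
        gcongr; linarith
    _ = _ := by rw [← Real.exp_nat_mul]; congr 1; field_simp

lemma colSample_mul_entry {n m t : ℕ} (q : Fin n → ℝ) (w : Fin t → Fin n)
    (M : Matrix (Fin n) (Fin m) ℝ) (l : Fin t) (a : Fin m) :
    ((colSample t q w)ᵀ * M) l a = (Real.sqrt (t * q (w l)))⁻¹ * M (w l) a := by
  simp [Matrix.mul_apply, colSample]

lemma mul_colSample_entry {n m t : ℕ} (q : Fin n → ℝ) (w : Fin t → Fin n)
    (M : Matrix (Fin m) (Fin n) ℝ) (l : Fin t) (a : Fin m) :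
    (M * colSample t q w) a l = (Real.sqrt (t * q (w l)))⁻¹ * M a (w l) := by
  simp [Matrix.mul_apply, colSample, mul_comm]

lemma band_of_norm {n t : ℕ} (ht : 0 < t) (q : Fin n → ℝ) (hq : ∀ j, 0 < q j)
    (M : Matrix (Fin n) (Fin t) ℝ) (w : Fin t → Fin n) (r : ℝ) (hr : 0 ≤ r)
    (h : ‖∑ l, Yvec q M (w l)‖ ≤ r) :
    loewnerBand (Mᵀ * M) (((colSample t q w)ᵀ * M)ᵀ * ((colSample t q w)ᵀ * M)) r := by
  have ht' : (0 : ℝ) < t := by exact_mod_cast ht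
  set Q := ((colSample t q w)ᵀ * M)ᵀ * ((colSample t q w)ᵀ * M) with hQ
  have hent : ∀ a b, (∑ l, Yvec q M (w l)) (a, b) = (Q - Mᵀ * M) a b := by
    intro a b
    have e1 : Q a b = ∑ l, (t : ℝ)⁻¹ * (M (w l) a * M (w l) b / q (w l)) := by
      rw [hQ, Matrix.mul_apply]
      refine Finset.sum_congr rfl fun l _ => ?_
      rw [Matrix.transpose_apply, colSample_mul_entry, colSample_mul_entry]
      have h1 : (Real.sqrt (t * q (w l)))⁻¹ * (Real.sqrt (t * q (w l)))⁻¹ = (t * q (w l))⁻¹ := by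
        rw [← mul_inv, Real.mul_self_sqrt (mul_pos ht' (hq _)).le]
      calc _ = ((Real.sqrt (t * q (w l)))⁻¹ * (Real.sqrt (t * q (w l)))⁻¹) *
                (M (w l) a * M (w l) b) := by ring
        _ = _ := by rw [h1, mul_inv]; ring
    have e2 : (Mᵀ * M) a b = ∑ k, q k * (M k a * M k b / q k) := by
      rw [Matrix.mul_apply]
      refine Finset.sum_congr rfl fun k _ => ?_
      have := (hq k).ne'
      rw [Matrix.transpose_apply]; field_simp
    rw [Matrix.sub_apply, e1, e2]
    simp only [Yvec, Zvec, WithLp.ofLp_sum, WithLp.ofLp_smul, WithLp.ofLp_sub, Finset.sum_apply,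
      Pi.smul_apply, Pi.sub_apply, smul_eq_mul, mul_sub, Finset.sum_sub_distrib, Finset.sum_const,
      Finset.card_univ, Fintype.card_fin, nsmul_eq_mul]
    field_simp
  have hfro : frobeniusSq (Q - Mᵀ * M) ≤ r ^ 2 := by
    have : frobeniusSq (Q - Mᵀ * M) = ‖∑ l, Yvec q M (w l)‖ ^ 2 := by
      rw [EuclideanSpace.norm_sq_eq, Fintype.sum_prod_type]
      simp only [frobeniusSq, hent, Real.norm_eq_abs, sq_abs]
    rw [this]
    gcongr
  have hquad := quad_le _ r hr hfro
  have hH1 : (Mᵀ * M).IsHermitian := by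
    simp [Matrix.IsHermitian, Matrix.conjTranspose_eq_transpose_of_trivial]
  have hH2 : Q.IsHermitian := by
    rw [hQ, Matrix.IsHermitian, Matrix.conjTranspose_eq_transpose_of_trivial, Matrix.transpose_mul,
      Matrix.transpose_transpose]
  have hH3 : (r • (1 : Matrix (Fin t) (Fin t) ℝ)).IsHermitian := by
    simp [Matrix.IsHermitian, Matrix.conjTranspose_eq_transpose_of_trivial]
  have hsq : ∀ x : Fin t → ℝ, x ⬝ᵥ x = ∑ i, x i ^ 2 := fun x => by simp [dotProduct, sq]
  constructor
  · refine .of_dotProduct_mulVec_nonneg ((hH1.add hH3).sub hH2) fun x => ?_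
    have := (abs_le.1 (hquad x)).2
    rw [star_trivial]
    simp only [Matrix.sub_mulVec, Matrix.add_mulVec, dotProduct_sub, dotProduct_add,
      Matrix.smul_mulVec, Matrix.one_mulVec, dotProduct_smul, smul_eq_mul, hsq] at this ⊢
    linarith
  · refine .of_dotProduct_mulVec_nonneg (hH2.sub (hH1.sub hH3)) fun x => ?_
    have := (abs_le.1 (hquad x)).1
    rw [star_trivial]
    simp only [Matrix.sub_mulVec, Matrix.add_mulVec, dotProduct_sub, dotProduct_add,
      Matrix.smul_mulVec, Matrix.one_mulVec, dotProduct_smul, smul_eq_mul, hsq] at this ⊢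
    linarith

lemma sum_weights {n : ℕ} (t : ℕ) (q : Fin n → ℝ) (hq1 : ∑ j, q j = 1) :
    ∑ w : Fin t → Fin n, ∏ l, q (w l) = 1 := by
  rw [← Fintype.sum_pow, hq1, one_pow]

lemma iidProb2_ge {n : ℕ} (t : ℕ) (q : Fin n → ℝ) (hq : ∀ j, 0 < q j) (hq1 : ∑ j, q j = 1)
    (E : Set ((Fin t → Fin n) × (Fin t → Fin n))) (a : (Fin t → Fin n) → ℝ) (α β : ℝ)
    (ha : ∑ w : Fin t → Fin n, (∏ l, q (w l)) * a w ≤ α)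
    (h : ∀ w1, 1 ≤ a w1 + β ∨ ∃ b : (Fin t → Fin n) → ℝ, (∀ w2, 0 ≤ b w2) ∧
      (∀ w2, (w1, w2) ∉ E → 1 ≤ b w2) ∧ ∑ w2, (∏ l, q (w2 l)) * b w2 ≤ a w1 + β) :
    1 - α - β ≤ iidProb2 t q q E := by
  classical
  have hP : ∀ w : Fin t → Fin n, 0 ≤ ∏ l, q (w l) := fun w => Finset.prod_nonneg fun l _ => (hq _).le
  unfold iidProb2
  rw [Fintype.sum_prod_type]
  have hw : ∀ w1, (∏ l, q (w1 l)) * (1 - a w1 - β) ≤ ∑ w2, Set.indicator E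
      (fun w : (Fin t → Fin n) × (Fin t → Fin n) => (∏ l, q (w.1 l)) * (∏ l, q (w.2 l))) (w1, w2) := by
    intro w1
    rcases h w1 with h1 | ⟨b, hb0, hb1, hb2⟩
    · have : 0 ≤ ∑ w2, Set.indicator E
        (fun w : (Fin t → Fin n) × (Fin t → Fin n) => (∏ l, q (w.1 l)) * (∏ l, q (w.2 l))) (w1, w2) :=
        Finset.sum_nonneg fun w2 _ => Set.indicator_nonneg (fun w _ => mul_nonneg (hP _) (hP _)) _
      refine le_trans ?_ this
      exact mul_nonpos_of_nonneg_of_nonpos (hP _) (by linarith)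
    · have hpt : ∀ w2, (∏ l, q (w1 l)) * (∏ l, q (w2 l)) * (1 - b w2) ≤ Set.indicator E
        (fun w : (Fin t → Fin n) × (Fin t → Fin n) => (∏ l, q (w.1 l)) * (∏ l, q (w.2 l))) (w1, w2) := by
        intro w2
        by_cases hE : (w1, w2) ∈ E
        · rw [Set.indicator_of_mem hE]
          have := mul_nonneg (hP w1) (hP w2)
          nlinarith [hb0 w2, mul_nonneg this (hb0 w2)]
        · rw [Set.indicator_of_notMem hE]
          exact mul_nonpos_of_nonneg_of_nonpos (mul_nonneg (hP _) (hP _)) (by linarith [hb1 w2 hE])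
      refine le_trans ?_ (Finset.sum_le_sum fun w2 _ => hpt w2)
      have : ∑ w2 : Fin t → Fin n, (∏ l, q (w1 l)) * (∏ l, q (w2 l)) * (1 - b w2)
          = (∏ l, q (w1 l)) * (1 - ∑ w2 : Fin t → Fin n, (∏ l, q (w2 l)) * b w2) := by
        have e1 : (1 : ℝ) = ∑ w2 : Fin t → Fin n, ∏ l, q (w2 l) := (sum_weights t q hq1).symm
        conv_rhs => rw [e1]
        rw [← Finset.sum_sub_distrib, Finset.mul_sum]
        exact Finset.sum_congr rfl fun w2 _ => by ring
      rw [this]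
      exact mul_le_mul_of_nonneg_left (by linarith) (hP _)
  refine le_trans ?_ (Finset.sum_le_sum fun w1 _ => hw w1)
  have : ∑ w : Fin t → Fin n, (∏ l, q (w l)) * (1 - a w - β)
      = (∑ w : Fin t → Fin n, ∏ l, q (w l)) * (1 - β) - ∑ w : Fin t → Fin n, (∏ l, q (w l)) * a w := by
    rw [Finset.sum_mul, ← Finset.sum_sub_distrib]
    exact Finset.sum_congr rfl fun w2 _ => by ring
  rw [this, sum_weights t q hq1]
  linarith

lemma final_arith (n : ℕ) (hn : 2 ≤ n) (δ : ℝ) (hδ : 0 < δ) (hδ1 : δ < 1) (ℓ : ℝ)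
    (hℓ : ℓ = Real.log (n / δ)) :
    ((n : ℝ) + 1) * Real.exp (-(512 * ℓ)) + 2 * Real.exp (-(3 * ℓ)) ≤ δ := by
  have hn' : (2 : ℝ) ≤ n := by exact_mod_cast hn
  have hl0 : 0 ≤ ℓ := by
    rw [hℓ]; apply Real.log_nonneg; rw [le_div_iff₀ hδ]; linarith
  have h1 : Real.exp (-(512 * ℓ)) ≤ Real.exp (-(3 * ℓ)) := Real.exp_le_exp.2 (by linarith)
  have hy : Real.exp (-ℓ) = δ / n := by
    rw [Real.exp_neg, hℓ, Real.exp_log (by positivity), inv_div]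
  have h3 : Real.exp (-(3 * ℓ)) = (δ / n) ^ 3 := by
    rw [← hy, ← Real.exp_nat_mul]; congr 1; push_cast; ring
  set y := δ / n
  have hny : n * y = δ := by simp only [y]; field_simp
  have hy0 : 0 < y := by positivity
  have hy2 : 2 * y ≤ δ := by nlinarith
  rw [h3] at h1 ⊢
  have hyy : y ^ 2 ≤ 1 / 4 := by nlinarith
  have h4 : ((n : ℝ) + 1) * Real.exp (-(512 * ℓ)) ≤ (n + 1) * y ^ 3 := by gcongr
  have h5 : ((n : ℝ) + 1) * y ^ 3 + 2 * y ^ 3 = (δ + 3 * y) * y ^ 2 := by rw [← hny]; ring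
  nlinarith

lemma core {n t k : ℕ} (hn : 2 ≤ n) (ht : 0 < t) (hk : 1 ≤ k)
    (A : Matrix (Fin n) (Fin n) ℝ) (q : Fin n → ℝ) (hq : ∀ j, 0 < q j) (hq1 : ∑ j, q j = 1)
    (F Φ ε δ ℓ : ℝ) (hF : 0 < F) (hFA : frobeniusSq A = F) (hΦ : 0 < Φ) (hε : 0 < ε) (hε1 : ε < 1)
    (hδ : 0 < δ) (hδ1 : δ < 1) (hℓ : ℓ = Real.log (n / δ))
    (hrow : ∀ i, ∑ j, A i j ^ 2 ≤ 2 * Φ * F * q i)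
    (hcol : ∀ j, ∑ i, A i j ^ 2 ≤ 2 * Φ * F * q j)
    (hent : ∀ i j, A i j ^ 2 ≤ 4 * Φ ^ 2 * F * (q i * q j))
    (htt : 512 * Φ * (k : ℝ) ^ 2 * ℓ / ε ^ 2 ≤ t) :
    1 - δ ≤ iidProb2 t q q {w | loewnerBand ((A * colSample t q w.1)ᵀ * (A * colSample t q w.1))
      (((colSample t q w.2)ᵀ * A * colSample t q w.1)ᵀ * ((colSample t q w.2)ᵀ * A * colSample t q w.1))
      ((ε / k) * frobeniusSq A)} := by
  have ht' : (0 : ℝ) < t := by exact_mod_cast ht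
  have hk' : (1 : ℝ) ≤ k := by exact_mod_cast hk
  have hk0 : (0 : ℝ) < k := by linarith
  have hn' : (2 : ℝ) ≤ n := by exact_mod_cast hn
  have hl0 : 0 < ℓ := by
    rw [hℓ]; apply Real.log_pos; rw [lt_div_iff₀ hδ]; linarith
  have htt2 : 512 * Φ * (k : ℝ) ^ 2 * ℓ ≤ t * ε ^ 2 := by
    rwa [div_le_iff₀ (by positivity)] at htt
  have hke : (1 : ℝ) ≤ k / ε := by rw [le_div_iff₀ hε]; linarith
  have htt3 : 512 * Φ * ℓ * (k / ε) ^ 2 ≤ t := by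
    refine le_trans (le_of_eq ?_) htt
    rw [div_pow]; ring
  have htt5 : 512 * Φ * ℓ * (k / ε) ≤ t := by
    refine le_trans ?_ htt3
    have : k / ε ≤ (k / ε) ^ 2 := by nlinarith
    gcongr
  have htt4 : 512 * Φ * ℓ ≤ t := by
    refine le_trans ?_ htt5
    exact le_mul_of_one_le_right (by positivity) hke
  -- scalar variables
  set W : Fin n → Fin n → ℝ := fun i j => 128 * ℓ / (Φ * F) * (A i j ^ 2 / (t * q j) / q i) with hW
  set V : Fin n → ℝ := fun j => 256 * ℓ / F * ((∑ i, A i j ^ 2) / (t * q j)) with hV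
  have hqn : ∀ j, 0 ≤ q j := fun j => (hq j).le
  have cW : ∀ i, ∑ w : Fin t → Fin n, (∏ l, q (w l)) * Real.exp (∑ l, W i (w l))
      ≤ Real.exp (512 * ℓ) := by
    intro i
    have hqi := hq i
    have := chernoff q hqn hq1 (W i) (fun j => by have := hq j; simp only [hW]; positivity)
      (fun j => by
        have hqj := hq j
        simp only [hW]
        calc _ = 128 * ℓ / (Φ * F * t * (q i * q j)) * A i j ^ 2 := by field_simp
          _ ≤ 128 * ℓ / (Φ * F * t * (q i * q j)) * (4 * Φ ^ 2 * F * (q i * q j)) := by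
              gcongr; exact hent i j
          _ = 512 * Φ * ℓ / t := by field_simp; ring
          _ ≤ 1 := (div_le_one ht').2 htt4) (256 * ℓ / t) (by
        calc _ = 128 * ℓ / (Φ * F * t * q i) * ∑ j, A i j ^ 2 := by
              rw [Finset.mul_sum]
              refine Finset.sum_congr rfl fun j _ => ?_
              have hqj := hq j
              simp only [hW]; field_simp
          _ ≤ 128 * ℓ / (Φ * F * t * q i) * (2 * Φ * F * q i) := by gcongr; exact hrow i
          _ = 256 * ℓ / t := by field_simp; ring) t
    refine this.trans (le_of_eq ?_)
    congr 1; field_simp; ring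
  have cV : ∑ w : Fin t → Fin n, (∏ l, q (w l)) * Real.exp (∑ l, V (w l))
      ≤ Real.exp (512 * ℓ) := by
    have := chernoff q hqn hq1 V
      (fun j => by
        have := hq j
        have : 0 ≤ ∑ i, A i j ^ 2 := Finset.sum_nonneg fun i _ => sq_nonneg _
        simp only [hV]; positivity)
      (fun j => by
        have hqj := hq j
        simp only [hV]
        calc _ ≤ 256 * ℓ / F * ((2 * Φ * F * q j) / (t * q j)) := by
              gcongr; exact hcol j
          _ = 512 * Φ * ℓ / t := by field_simp; ring
          _ ≤ 1 := (div_le_one ht').2 htt4) (256 * ℓ / t) (by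
        apply le_of_eq
        calc _ = 256 * ℓ / (F * t) * ∑ j, ∑ i, A i j ^ 2 := by
              rw [Finset.mul_sum]
              refine Finset.sum_congr rfl fun j _ => ?_
              have hqj := hq j
              simp only [hV]; field_simp
          _ = 256 * ℓ / (F * t) * F := by rw [Finset.sum_comm, ← hFA]; rfl
          _ = 256 * ℓ / t := by field_simp) t
    refine this.trans (le_of_eq ?_)
    congr 1; field_simp; ring
  have hfin := final_arith n hn δ hδ hδ1 ℓ hℓ
  set a : (Fin t → Fin n) → ℝ := fun w =>
    (∑ i, Real.exp (∑ l, W i (w l)) + Real.exp (∑ l, V (w l))) * Real.exp (-(1024 * ℓ)) with ha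
  have ha0 : ∀ w, 0 ≤ a w := fun w => by
    simp only [ha]
    exact mul_nonneg (add_nonneg (Finset.sum_nonneg fun i _ => (Real.exp_pos _).le) (Real.exp_pos _).le)
      (Real.exp_pos _).le
  have haE : ∑ w : Fin t → Fin n, (∏ l, q (w l)) * a w ≤ (n + 1) * Real.exp (-(512 * ℓ)) := by
    have e1 : ∑ w : Fin t → Fin n, (∏ l, q (w l)) * a w
        = (∑ i, ∑ w : Fin t → Fin n, (∏ l, q (w l)) * Real.exp (∑ l, W i (w l))
          + ∑ w : Fin t → Fin n, (∏ l, q (w l)) * Real.exp (∑ l, V (w l))) * Real.exp (-(1024 * ℓ)) := by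
      rw [Finset.sum_comm, ← Finset.sum_add_distrib, Finset.sum_mul]
      refine Finset.sum_congr rfl fun w _ => ?_
      simp only [ha]
      have e0 : ∑ i, (∏ l, q (w l)) * Real.exp (∑ l, W i (w l))
          = (∏ l, q (w l)) * ∑ i, Real.exp (∑ l, W i (w l)) := (Finset.mul_sum _ _ _).symm
      rw [e0, ← mul_add, mul_assoc]
    rw [e1]
    have e2 : ∑ i, ∑ w : Fin t → Fin n, (∏ l, q (w l)) * Real.exp (∑ l, W i (w l))
        ≤ n * Real.exp (512 * ℓ) := by
      refine (Finset.sum_le_sum fun i _ => cW i).trans (le_of_eq ?_)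
      simp
    have e3 : Real.exp (-(512 * ℓ)) = Real.exp (512 * ℓ) * Real.exp (-(1024 * ℓ)) := by
      rw [← Real.exp_add]; congr 1; ring
    rw [e3, ← mul_assoc]
    apply mul_le_mul_of_nonneg_right _ (Real.exp_pos _).le
    linarith
  refine le_trans ?_ (iidProb2_ge t q hq hq1 _ a _ (2 * Real.exp (-(3 * ℓ))) haE ?_)
  · linarith
  intro w1
  set M := A * colSample t q w1 with hM
  have hMe : ∀ i l, M i l ^ 2 = A i (w1 l) ^ 2 / (t * q (w1 l)) := by
    intro i l
    rw [hM, mul_colSample_entry, mul_pow, inv_pow, Real.sq_sqrt (mul_pos ht' (hq _)).le]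
    ring
  have hβ : 0 < Real.exp (-(3 * ℓ)) := Real.exp_pos _
  have hbig : ∀ s, 1024 * ℓ ≤ s → 1 ≤ Real.exp s * Real.exp (-(1024 * ℓ)) := by
    intro s hs
    rw [← Real.exp_add]; apply Real.one_le_exp; linarith
  by_cases hg1 : ∀ i, (∑ l, M i l ^ 2) / q i ≤ 8 * Φ * F
  swap
  · left
    push Not at hg1
    obtain ⟨i, hi⟩ := hg1
    have hqi := hq i
    have h1 : ∑ l, W i (w1 l) = 128 * ℓ / (Φ * F) * ((∑ l, M i l ^ 2) / q i) := by
      rw [Finset.sum_div, Finset.mul_sum]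
      exact Finset.sum_congr rfl fun l _ => by rw [hMe]
    have h2 : 1024 * ℓ ≤ ∑ l, W i (w1 l) := by
      rw [h1]
      calc 1024 * ℓ = 128 * ℓ / (Φ * F) * (8 * Φ * F) := by field_simp; ring
        _ ≤ _ := by gcongr
    have h3 := hbig _ h2
    have h4 : Real.exp (∑ l, W i (w1 l)) ≤ ∑ i, Real.exp (∑ l, W i (w1 l)) :=
      Finset.single_le_sum (f := fun i => Real.exp (∑ l, W i (w1 l)))
        (fun i _ => (Real.exp_pos _).le) (Finset.mem_univ i)
    have h5 : Real.exp (∑ l, W i (w1 l)) * Real.exp (-(1024 * ℓ)) ≤ a w1 := by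
      simp only [ha]
      apply mul_le_mul_of_nonneg_right _ (Real.exp_pos _).le
      linarith [Real.exp_pos (∑ l, V (w1 l))]
    linarith
  by_cases hg2 : ∑ i, ∑ l, M i l ^ 2 ≤ 4 * F
  swap
  · left
    push Not at hg2
    have h1 : ∑ l, V (w1 l) = 256 * ℓ / F * ∑ i, ∑ l, M i l ^ 2 := by
      rw [Finset.sum_comm, Finset.mul_sum]
      refine Finset.sum_congr rfl fun l _ => ?_
      simp only [hV, hMe, Finset.sum_div]
    have h2 : 1024 * ℓ ≤ ∑ l, V (w1 l) := by
      rw [h1]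
      calc 1024 * ℓ = 256 * ℓ / F * (4 * F) := by field_simp; ring
        _ ≤ _ := by gcongr
    have h3 := hbig _ h2
    have h5 : Real.exp (∑ l, V (w1 l)) * Real.exp (-(1024 * ℓ)) ≤ a w1 := by
      simp only [ha]
      apply mul_le_mul_of_nonneg_right _ (Real.exp_pos _).le
      have : 0 ≤ ∑ i, Real.exp (∑ l, W i (w1 l)) := Finset.sum_nonneg fun i _ => (Real.exp_pos _).le
      linarith
    linarith
  right
  set lam := 4 * ℓ * (k / ε) / F with hlam
  have hlam0 : 0 < lam := by positivity
  have htail := row_tail ht q hq hq1 M (8 * Φ * F) (4 * F) lam hlam0.le hg1 hg2 (by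
    calc lam * (2 * (8 * Φ * F)) = 64 * Φ * ℓ * (k / ε) := by rw [hlam]; field_simp; ring
      _ ≤ 512 * Φ * ℓ * (k / ε) := by gcongr; norm_num
      _ ≤ t := htt5)
  have hexp : lam ^ 2 * (8 * Φ * F) * (4 * F) / t ≤ ℓ := by
    rw [div_le_iff₀ ht']
    calc _ = ℓ * (512 * Φ * ℓ * (k / ε) ^ 2) := by rw [hlam]; field_simp; ring
      _ ≤ _ := by gcongr
  refine ⟨fun w2 => 2 * Real.exp (-(4 * ℓ)) * Real.cosh (lam * ‖∑ l, Yvec q M (w2 l)‖),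
    fun w2 => by have := Real.cosh_pos (lam * ‖∑ l, Yvec q M (w2 l)‖); positivity, ?_, ?_⟩
  · intro w2 hw2
    have hnot : ¬ ‖∑ l, Yvec q M (w2 l)‖ ≤ (ε / k) * frobeniusSq A := by
      intro hle
      apply hw2
      have := band_of_norm ht q hq M w2 _ (by rw [hFA]; positivity) hle
      simp only [Set.mem_ofPred_eq]
      rw [Matrix.mul_assoc]
      exact this
    push Not at hnot
    have h1 : 4 * ℓ ≤ lam * ‖∑ l, Yvec q M (w2 l)‖ := by
      calc 4 * ℓ = lam * ((ε / k) * frobeniusSq A) := by rw [hlam, hFA]; field_simp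
        _ ≤ _ := by gcongr
    have h2 : Real.exp (4 * ℓ) ≤ 2 * Real.cosh (lam * ‖∑ l, Yvec q M (w2 l)‖) := by
      rw [Real.cosh_eq]
      have := Real.exp_le_exp.2 h1
      have := Real.exp_pos (-(lam * ‖∑ l, Yvec q M (w2 l)‖))
      linarith
    calc (1 : ℝ) = Real.exp (-(4 * ℓ)) * Real.exp (4 * ℓ) := by rw [← Real.exp_add]; simp
      _ ≤ Real.exp (-(4 * ℓ)) * (2 * Real.cosh (lam * ‖∑ l, Yvec q M (w2 l)‖)) := by gcongr
      _ = _ := by ring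
  · have e : ∑ w2 : Fin t → Fin n, (∏ l, q (w2 l)) * (2 * Real.exp (-(4 * ℓ)) *
        Real.cosh (lam * ‖∑ l, Yvec q M (w2 l)‖)) = 2 * Real.exp (-(4 * ℓ)) *
        ∑ w2 : Fin t → Fin n, (∏ l, q (w2 l)) * Real.cosh (lam * ‖∑ l, Yvec q M (w2 l)‖) := by
      rw [Finset.mul_sum]; exact Finset.sum_congr rfl fun w _ => by ring
    rw [e]
    have h1 := htail.trans (Real.exp_le_exp.2 hexp)
    have h2 : Real.exp (-(3 * ℓ)) = Real.exp (-(4 * ℓ)) * Real.exp ℓ := by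
      rw [← Real.exp_add]; congr 1; ring
    rw [h2]
    have h3 := mul_le_mul_of_nonneg_left h1 (Real.exp_pos (-(4 * ℓ))).le
    linarith [ha0 w1]

lemma core_one {t : ℕ} (ht : 0 < t) (A : Matrix (Fin 1) (Fin 1) ℝ) (q : Fin 1 → ℝ)
    (hq : ∀ j, 0 < q j) (hq1 : ∑ j, q j = 1) (r δ : ℝ) (hr : 0 ≤ r) (hδ : 0 < δ) :
    1 - δ ≤ iidProb2 t q q {w | loewnerBand ((A * colSample t q w.1)ᵀ * (A * colSample t q w.1))
      (((colSample t q w.2)ᵀ * A * colSample t q w.1)ᵀ * ((colSample t q w.2)ᵀ * A * colSample t q w.1))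
      r} := by
  refine le_trans ?_ (iidProb2_ge t q hq hq1 _ (fun _ => 0) 0 0 (by simp) ?_)
  · linarith
  intro w1
  right
  refine ⟨fun _ => 0, fun _ => le_rfl, fun w2 hw2 => ?_, by simp⟩
  exfalso
  apply hw2
  simp only [Set.mem_ofPred_eq]
  rw [Matrix.mul_assoc]
  apply band_of_norm ht q hq _ w2 _ hr
  have : ∀ i, Yvec q (A * colSample t q w1) i = 0 := by
    intro i
    have h1 : q 0 = 1 := by simpa using hq1
    rw [Subsingleton.elim i 0]
    simp [Yvec, h1]
  simp [this, hr]

/-- Robust spectral bound for the row sample: with two independent diagonal samplings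
(columns then rows), (SAT)ᵀ(SAT) ≈ (AT)ᵀ(AT) up to ±(ε/k)‖A‖_F²·I in the Loewner order,
with probability at least 1−δ. -/
theorem robust_spectral_bound_row :
    ∃ c₀ : ℝ, 0 < c₀ ∧
      ∀ (n : ℕ) (A N : Matrix (Fin n) (Fin n) ℝ) (η ε δ φ : ℝ) (k t : ℕ),
        A.PosSemidef →
        0 < η → η ≤ 1 →
        frobeniusSq N ≤ η * frobeniusSq A →
        (∀ j, (∑ i, (N i j)^2) ≤ ∑ i, (A i j)^2) →
        (∀ j, 0 < (A + N) j j) →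
        IsGreatest (Set.range fun j => A j j / (A + N) j j) φ →
        0 < ε → ε < 1 → 0 < δ → δ < 1 → 1 ≤ k →
        c₀ * φ * Real.sqrt n * (k : ℝ)^2 * Real.log ((n : ℝ) / δ) / ε^2 ≤ (t : ℝ) →
        1 - δ ≤
          iidProb2 t (fun j => (A + N) j j / (A + N).trace)
              (fun j => (A + N) j j / (A + N).trace)
            {w : (Fin t → Fin n) × (Fin t → Fin n) |
              loewnerBand
                ((A * colSample t (fun j => (A + N) j j / (A + N).trace) w.1)ᵀ *
                  (A * colSample t (fun j => (A + N) j j / (A + N).trace) w.1))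
                (((colSample t (fun j => (A + N) j j / (A + N).trace) w.2)ᵀ * A *
                    colSample t (fun j => (A + N) j j / (A + N).trace) w.1)ᵀ *
                  ((colSample t (fun j => (A + N) j j / (A + N).trace) w.2)ᵀ * A *
                    colSample t (fun j => (A + N) j j / (A + N).trace) w.1))
                ((ε / k) * frobeniusSq A)} := by
  refine ⟨512, by norm_num, ?_⟩
  intro n A N η ε δ φ k t hA hη hη1 hN _ hpos hφ hε hε1 hδ hδ1 hk ht
  obtain ⟨⟨j0, _⟩, hub⟩ := hφ
  have hn0 : 0 < n := j0.pos
  have hn1 : (1 : ℝ) ≤ n := by exact_mod_cast hn0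
  have hF0 : 0 ≤ frobeniusSq A :=
    Finset.sum_nonneg fun i _ => Finset.sum_nonneg fun j _ => sq_nonneg _
  have hent : ∀ (B : Matrix (Fin n) (Fin n) ℝ) (i j : Fin n), B i j ^ 2 ≤ frobeniusSq B := by
    intro B i j
    refine le_trans (Finset.single_le_sum (f := fun j => B i j ^ 2) (fun j _ => sq_nonneg _)
      (Finset.mem_univ j)) ?_
    exact Finset.single_le_sum (f := fun i => ∑ j, B i j ^ 2)
      (fun i _ => Finset.sum_nonneg fun j _ => sq_nonneg _) (Finset.mem_univ i)
  have hNF : frobeniusSq N ≤ frobeniusSq A := hN.trans (mul_le_of_le_one_left hF0 hη1)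
  have hF : 0 < frobeniusSq A := by
    refine lt_of_le_of_ne hF0 fun h0 => ?_
    have h1 := hent A j0 j0
    have h2 := hent N j0 j0
    have h3 : A j0 j0 = 0 := by nlinarith [sq_nonneg (A j0 j0)]
    have h4 : N j0 j0 = 0 := by nlinarith [sq_nonneg (N j0 j0)]
    have := hpos j0
    simp [h3, h4] at this
  have hd0 : ∀ i, 0 ≤ A i i := fun i => hA.diag_nonneg
  have hdφ : ∀ i, A i i ≤ φ * (A + N) i i := by
    intro i
    have := hub ⟨i, rfl⟩
    exact (div_le_iff₀ (hpos i)).1 this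
  have hφ0 : 0 < φ := by
    by_contra hle
    push Not at hle
    have hz : ∀ i, A i i = 0 := fun i =>
      le_antisymm ((hdφ i).trans (mul_nonpos_of_nonpos_of_nonneg hle (hpos i).le)) (hd0 i)
    have : frobeniusSq A ≤ 0 := by
      refine Finset.sum_nonpos fun i _ => Finset.sum_nonpos fun j _ => ?_
      have := diag_bound A hA i j
      rwa [hz i, zero_mul] at this
    linarith
  set τ := (A + N).trace with hτ
  have hτsum : τ = ∑ i, (A + N) i i := rfl
  have hτ0 : 0 < τ := by
    rw [hτsum]
    exact Finset.sum_pos (fun i _ => hpos i) ⟨j0, Finset.mem_univ _⟩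
  have hτ2 : τ ^ 2 ≤ 4 * n * frobeniusSq A := by
    have h1 : τ ^ 2 ≤ n * ∑ i, (A + N) i i ^ 2 := by
      have := sq_sum_le_card_mul_sum_sq (s := Finset.univ) (f := fun i => (A + N) i i)
      simpa [hτsum] using this
    have h2 : ∑ i, (A + N) i i ^ 2 ≤ 2 * frobeniusSq A + 2 * frobeniusSq N := by
      simp only [frobeniusSq, Finset.mul_sum]
      rw [← Finset.sum_add_distrib]
      refine Finset.sum_le_sum fun i _ => ?_
      rw [← Finset.sum_add_distrib]
      have h3 : (A + N) i i ^ 2 ≤ 2 * A i i ^ 2 + 2 * N i i ^ 2 := by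
        rw [Matrix.add_apply]; nlinarith [sq_nonneg (A i i - N i i)]
      refine h3.trans (Finset.single_le_sum (f := fun j => 2 * A i j ^ 2 + 2 * N i j ^ 2)
        (fun j _ => by positivity) (Finset.mem_univ i))
    calc _ ≤ (n : ℝ) * (4 * frobeniusSq A) := h1.trans (by gcongr; linarith)
      _ = _ := by ring
  set F := frobeniusSq A with hFdef
  have hτ1 : τ ≤ 2 * Real.sqrt n * Real.sqrt F := by
    refine le_of_sq_le_sq ?_ (by positivity)
    rw [mul_pow, mul_pow, Real.sq_sqrt (by positivity), Real.sq_sqrt hF0]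
    linarith
  set q : Fin n → ℝ := fun j => (A + N) j j / τ with hqdef
  have hq : ∀ j, 0 < q j := fun j => div_pos (hpos j) hτ0
  have hq1 : ∑ j, q j = 1 := by
    simp only [hqdef]
    rw [← Finset.sum_div, ← hτsum, div_self hτ0.ne']
  have hdq : ∀ i, A i i ≤ φ * (τ * q i) := by
    intro i
    have : τ * q i = (A + N) i i := by simp only [hqdef]; field_simp
    rw [this]; exact hdφ i
  have hrow : ∀ i, ∑ j, A i j ^ 2 ≤ 2 * (φ * Real.sqrt n) * F * q i := by
    intro i
    have hqi := hq i
    calc _ ≤ Real.sqrt F * A i i := row_bound A hA i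
      _ ≤ Real.sqrt F * (φ * (τ * q i)) := by gcongr; exact hdq i
      _ ≤ Real.sqrt F * (φ * ((2 * Real.sqrt n * Real.sqrt F) * q i)) := by gcongr
      _ = 2 * (φ * Real.sqrt n) * (Real.sqrt F * Real.sqrt F) * q i := by ring
      _ = _ := by rw [Real.mul_self_sqrt hF0]
  have hsym : ∀ a b, A a b = A b a := fun a b => by
    have := congrFun (congrFun hA.1 b) a
    simpa using this
  have hl0 : 0 < Real.log (n / δ) := by
    apply Real.log_pos; rw [lt_div_iff₀ hδ]; linarith
  have hk0 : (0 : ℝ) < k := by exact_mod_cast hk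
  have hsn : 0 < Real.sqrt n := Real.sqrt_pos.2 (by linarith)
  have htpos : 0 < t := by
    have : (0 : ℝ) < t := lt_of_lt_of_le (by positivity) ht
    exact_mod_cast this
  rcases Nat.lt_or_ge n 2 with h | h
  · obtain rfl : n = 1 := by omega
    exact core_one htpos A q hq hq1 _ δ (by positivity) hδ
  · refine core h htpos hk A q hq hq1 F (φ * Real.sqrt n) ε δ _ hF rfl (by positivity) hε hε1 hδ hδ1 rfl
      hrow ?_ ?_ ?_
    · intro j
      simp_rw [hsym _ j]
      exact hrow j
    · intro i j
      have hqi := hq i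
      have hqj := hq j
      calc _ ≤ A i i * A j j := diag_bound A hA i j
        _ ≤ (φ * (τ * q i)) * (φ * (τ * q j)) := mul_le_mul (hdq i) (hdq j) (hd0 j) (by positivity)
        _ = φ ^ 2 * τ ^ 2 * (q i * q j) := by ring
        _ ≤ φ ^ 2 * (4 * n * F) * (q i * q j) := by gcongr
        _ = _ := by rw [mul_pow, Real.sq_sqrt (by positivity)]; ring
    · refine le_trans (le_of_eq ?_) ht
      ring
end
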